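/- For every τ ∈ ℍ∖E_D one has: (i) ξ_{2−2k}(F_{1−k,D,𝒜})(τ) = D^{1/2−k} · f_{k,D,𝒜}(τ); (ii) 𝒟^{2k−1}(F_{1−k,D,𝒜})(τ) = −D^{1/2−k} · ((2k−2)!/(4π)^{2k−1}) · f_{k,D,𝒜}(τ); and (iii) Δ_{2−2k}(F_{1−k,D,𝒜})(τ) = 0. -/

import Mathlib

noncomputable section

open MeasureTheory

/-- The set of integral binary quadratic forms `[a,b,c]` of discriminant `D`. -/
def QD (D : ℤ) : Set (ℤ × ℤ × ℤ) := {q | q.2.1 ^ 2 - 4 * q.1 * q.2.2 = D}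

/-- `Q(τ,1) = a τ² + b τ + c`. -/
def Qval (q : ℤ × ℤ × ℤ) (τ : ℂ) : ℂ :=
  (q.1 : ℂ) * τ ^ 2 + (q.2.1 : ℂ) * τ + (q.2.2 : ℂ)

/-- `a|τ|² + b x + c` where `τ = x + iy`. -/
def Qell (q : ℤ × ℤ × ℤ) (τ : ℂ) : ℝ :=
  (q.1 : ℝ) * Complex.normSq τ + (q.2.1 : ℝ) * τ.re + (q.2.2 : ℝ)

/-- `ψ(v) = (1/2) ∫₀ᵛ u^(k-3/2) (1-u)^(-1/2) du`. -/
def psi (k : ℕ) (v : ℝ) : ℝ :=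
  (1 / 2) * ∫ u in (0:ℝ)..v, u ^ ((k : ℝ) - 3 / 2) * (1 - u) ^ (-(1:ℝ) / 2)

/-- real power of the integer `D`, as a complex number. -/
def Dpow (D : ℤ) (e : ℝ) : ℂ := (((D : ℝ) ^ e : ℝ) : ℂ)

/-- The summand of the series defining `F_{1-k,D}`. -/
def Fsummand (k : ℕ) (D : ℤ) (τ : ℂ) (q : ℤ × ℤ × ℤ) : ℂ :=
  ((Real.sign (Qell q τ) : ℝ) : ℂ) * Qval q τ ^ (k - 1) *
    ((psi k ((D : ℝ) * τ.im ^ 2 / Complex.normSq (Qval q τ)) : ℝ) : ℂ)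

/-- `F_{1-k,D}`. -/
def F (k : ℕ) (D : ℤ) (τ : ℂ) : ℂ :=
  (Dpow D (1 / 2 - (k : ℝ)) / (((Nat.choose (2 * k - 2) (k - 1) : ℝ) * Real.pi : ℝ) : ℂ)) *
    ∑' q : QD D, Fsummand k D τ (q : ℤ × ℤ × ℤ)

/-- `f_{k,D}`. -/
def fkD (k : ℕ) (D : ℤ) (τ : ℂ) : ℂ :=
  (Dpow D ((k : ℝ) - 1 / 2) / (((Nat.choose (2 * k - 2) (k - 1) : ℝ) * Real.pi : ℝ) : ℂ)) *
    ∑' q : QD D, Qval (q : ℤ × ℤ × ℤ) τ ^ (-(k : ℤ))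

/-- Action of `SL₂(ℤ)` on binary quadratic forms: `(Q ∘ γ)(X,Y) = Q(pX+qY, rX+sY)`. -/
def QAct (q : ℤ × ℤ × ℤ) (γ : Matrix.SpecialLinearGroup (Fin 2) ℤ) : ℤ × ℤ × ℤ :=
  (q.1 * (γ.1 0 0) ^ 2 + q.2.1 * (γ.1 0 0) * (γ.1 1 0) + q.2.2 * (γ.1 1 0) ^ 2,
   2 * q.1 * (γ.1 0 0) * (γ.1 0 1) + q.2.1 * ((γ.1 0 0) * (γ.1 1 1) + (γ.1 0 1) * (γ.1 1 0))
     + 2 * q.2.2 * (γ.1 1 0) * (γ.1 1 1),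
   q.1 * (γ.1 0 1) ^ 2 + q.2.1 * (γ.1 0 1) * (γ.1 1 1) + q.2.2 * (γ.1 1 1) ^ 2)

/-- A narrow class: an orbit of the `SL₂(ℤ)`-action on `QD D`. -/
def IsNarrowClass (D : ℤ) (𝒜 : Set (ℤ × ℤ × ℤ)) : Prop :=
  ∃ q₀ ∈ QD D, 𝒜 = {q | ∃ γ : Matrix.SpecialLinearGroup (Fin 2) ℤ, QAct q₀ γ = q}

/-- `F_{1-k,D,𝒜}`. -/
def FA (k : ℕ) (D : ℤ) (𝒜 : Set (ℤ × ℤ × ℤ)) (τ : ℂ) : ℂ :=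
  ((-1 : ℂ) ^ k * Dpow D (1 / 2 - (k : ℝ)) /
      (((Nat.choose (2 * k - 2) (k - 1) : ℝ) * Real.pi : ℝ) : ℂ)) *
    ∑' q : 𝒜, Fsummand k D τ (q : ℤ × ℤ × ℤ)

/-- `f_{k,D,𝒜}`. -/
def fA (k : ℕ) (D : ℤ) (𝒜 : Set (ℤ × ℤ × ℤ)) (τ : ℂ) : ℂ :=
  ((-1 : ℂ) ^ k * Dpow D ((k : ℝ) - 1 / 2) /
      (((Nat.choose (2 * k - 2) (k - 1) : ℝ) * Real.pi : ℝ) : ℂ)) *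
    ∑' q : 𝒜, Qval (q : ℤ × ℤ × ℤ) τ ^ (-(k : ℤ))

/-- Partial derivative in the real direction `x`. -/
def dxx (G : ℂ → ℂ) (τ : ℂ) : ℂ :=
  deriv (fun x : ℝ => G ((x : ℂ) + (τ.im : ℂ) * Complex.I)) τ.re

/-- Partial derivative in the imaginary direction `y`. -/
def dyy (G : ℂ → ℂ) (τ : ℂ) : ℂ :=
  deriv (fun y : ℝ => G ((τ.re : ℂ) + (y : ℂ) * Complex.I)) τ.im

/-- Wirtinger derivative `∂/∂τ̄ = (1/2)(∂/∂x + i ∂/∂y)`. -/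
def wirDbar (G : ℂ → ℂ) (τ : ℂ) : ℂ := (dxx G τ + Complex.I * dyy G τ) / 2

/-- Wirtinger derivative `∂/∂τ = (1/2)(∂/∂x - i ∂/∂y)`. -/
def wirD (G : ℂ → ℂ) (τ : ℂ) : ℂ := (dxx G τ - Complex.I * dyy G τ) / 2

/-- The operator `ξ_{2-2k}(G)(τ) = 2 i y^{2-2k} conj(∂G/∂τ̄)`. -/
def xiOp (k : ℕ) (G : ℂ → ℂ) (τ : ℂ) : ℂ :=
  2 * Complex.I * (τ.im : ℂ) ^ ((2 : ℤ) - 2 * (k : ℤ)) * (starRingEnd ℂ) (wirDbar G τ)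

/-- The operator `𝒟 = (1/(2πi)) ∂/∂τ`. -/
def Dop (G : ℂ → ℂ) : ℂ → ℂ := fun τ => (1 / (2 * (Real.pi : ℂ) * Complex.I)) * wirD G τ

/-- The weight `2-2k` hyperbolic Laplacian. -/
def DeltaOp (k : ℕ) (G : ℂ → ℂ) (τ : ℂ) : ℂ :=
  -(τ.im : ℂ) ^ 2 * (dxx (fun z => dxx G z) τ + dyy (fun z => dyy G z) τ)
    + Complex.I * ((2 : ℂ) - 2 * (k : ℂ)) * (τ.im : ℂ) * (dxx G τ + Complex.I * dyy G τ)

/-- `φ(v) = ∫₀ᵛ sin(u)^{2k-2} du`. -/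
def phi (k : ℕ) (v : ℝ) : ℝ := ∫ u in (0:ℝ)..v, Real.sin u ^ (2 * k - 2)

/-- `φ̂(τ) = τ^{k-1} sgn(x) φ(arctan|y/x|)`, with value `0` when `x = 0`. -/
def phiHat (k : ℕ) (τ : ℂ) : ℂ :=
  τ ^ (k - 1) * ((Real.sign τ.re : ℝ) : ℂ) *
    ((phi k (Real.arctan |τ.im / τ.re|) : ℝ) : ℂ)

/-- The non-holomorphic Eichler integral
`f^*(τ) = (2i)^{1-2k} ∫_{-τ̄}^{i∞} conj(f(-z̄)) (z+τ)^{2k-2} dz`,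
parametrized along the vertical path `z = -τ̄ + it`, `t ∈ (0,∞)`. -/
def fstar (k : ℕ) (f : ℂ → ℂ) (τ : ℂ) : ℂ :=
  (2 * Complex.I) ^ ((1 : ℤ) - 2 * (k : ℤ)) * Complex.I *
    ∫ t in Set.Ioi (0 : ℝ), (starRingEnd ℂ) (f (τ + (t : ℂ) * Complex.I)) *
      (((2 * τ.im + t : ℝ) : ℂ) * Complex.I) ^ (2 * k - 2)

/-- `a : ℕ → ℂ` is the sequence of Fourier coefficients of `f` (with `a n` the
coefficient of `e^{2πi(n+1)τ}`). -/
def HasFourier (a : ℕ → ℂ) (f : ℂ → ℂ) : Prop :=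
  ∀ τ : ℂ, 0 < τ.im →
    f τ = ∑' n : ℕ, a n * Complex.exp (2 * (Real.pi : ℂ) * Complex.I * ((n : ℂ) + 1) * τ)

/-- The holomorphic Eichler integral `ℰ_f(τ) = ∑_{n≥1} (a_n/n^{2k-1}) e^{2πinτ}`. -/
def EichlerE (k : ℕ) (a : ℕ → ℂ) (τ : ℂ) : ℂ :=
  ∑' n : ℕ, a n / ((n : ℂ) + 1) ^ (2 * k - 1) *
    Complex.exp (2 * (Real.pi : ℂ) * Complex.I * ((n : ℂ) + 1) * τ)

/-- `r_{a,b}(𝒜) = 1_{[Q_{a,b} ∈ 𝒜]} + (-1)^k 1_{[-Q_{a,b} ∈ 𝒜]}`. -/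
def rab (k : ℕ) (D : ℤ) (𝒜 : Set (ℤ × ℤ × ℤ)) (a b : ℤ) : ℝ :=
  Set.indicator 𝒜 1 (a, b, (b ^ 2 - D) / (4 * a)) +
    (-1 : ℝ) ^ k * Set.indicator 𝒜 1 (-a, -b, -((b ^ 2 - D) / (4 * a)))

/-- The constant `c_∞(𝒜)`. -/
def cInftyA (k : ℕ) (D : ℤ) (𝒜 : Set (ℤ × ℤ × ℤ)) : ℝ :=
  -(1 / (2 ^ (2 * k - 2) * (2 * (k : ℝ) - 1) * (Nat.choose (2 * k - 2) (k - 1) : ℝ))) *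
    ∑' n : ℕ, (1 / ((n : ℝ) + 1) ^ k) *
      ∑ b ∈ Finset.range (2 * (n + 1)),
        if (4 * ((n : ℤ) + 1)) ∣ ((b : ℤ) ^ 2 - D) then rab k D 𝒜 ((n : ℤ) + 1) (b : ℤ) else 0

/-- The constant `c_∞`. -/
def cInfty (k : ℕ) (D : ℤ) : ℝ :=
  -(1 / (2 ^ (2 * k - 3) * (2 * (k : ℝ) - 1) * (Nat.choose (2 * k - 2) (k - 1) : ℝ))) *
    ∑' n : ℕ, (1 / ((n : ℝ) + 1) ^ k) *
      (((Finset.range (2 * (n + 1))).filter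
        (fun b : ℕ => (4 * ((n : ℤ) + 1)) ∣ ((b : ℤ) ^ 2 - D))).card : ℝ)

/-- The weight `2-2k` Hecke operator `T_p`. -/
def heckeT (k : ℕ) (p : ℕ) (g : ℂ → ℂ) (τ : ℂ) : ℂ :=
  (p : ℂ) ^ ((1 : ℤ) - 2 * (k : ℤ)) * g ((p : ℂ) * τ) +
    (p : ℂ)⁻¹ * ∑ r ∈ Finset.range p, g ((τ + (r : ℂ)) / (p : ℂ))

open scoped Classical in
/-- The symbol `(D|p)`. -/
def legSym (D : ℤ) (p : ℕ) : ℤ :=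
  if (p : ℤ) ∣ D then 0
  else if p = 2 then (if D % 8 = 1 ∨ D % 8 = 7 then 1 else -1)
  else if ∃ m : ℤ, (p : ℤ) ∣ (m ^ 2 - D) then 1 else -1

/-- Primitive forms of discriminant `D`. -/
def QDprim (D : ℤ) : Set (ℤ × ℤ × ℤ) :=
  {q | q.2.1 ^ 2 - 4 * q.1 * q.2.2 = D ∧ Int.gcd q.1 (Int.gcd q.2.1 q.2.2) = 1}

/-- `F'_{1-k,D}`: the sum over primitive forms, with normalization `D^{(1-k)/2}`. -/
def Fprim (k : ℕ) (D : ℤ) (τ : ℂ) : ℂ :=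
  (Dpow D ((1 - (k : ℝ)) / 2) / (((Nat.choose (2 * k - 2) (k - 1) : ℝ) * Real.pi : ℝ) : ℂ)) *
    ∑' q : QDprim D, Fsummand k D τ (q : ℤ × ℤ × ℤ)

/-- The root `η_Q = (-b+√D)/(2a)`. -/
def etaQ (D : ℤ) (q : ℤ × ℤ × ℤ) : ℝ := (-(q.2.1 : ℝ) + Real.sqrt (D : ℝ)) / (2 * (q.1 : ℝ))

/-- The root `η'_Q = (-b-√D)/(2a)`. -/
def etaQ' (D : ℤ) (q : ℤ × ℤ × ℤ) : ℝ := (-(q.2.1 : ℝ) - Real.sqrt (D : ℝ)) / (2 * (q.1 : ℝ))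

/-- The scaling matrix `A_Q`. -/
def AQ (D : ℤ) (q : ℤ × ℤ × ℤ) : Matrix (Fin 2) (Fin 2) ℝ :=
  (1 / Real.sqrt |etaQ D q - etaQ' D q|) •
    !![1, -(etaQ' D q);
       -(Real.sign (etaQ D q - etaQ' D q)), Real.sign (etaQ D q - etaQ' D q) * etaQ D q]

/-- Real matrix associated to an element of `SL₂(ℤ)`. -/
def toR (γ : Matrix.SpecialLinearGroup (Fin 2) ℤ) : Matrix (Fin 2) (Fin 2) ℝ :=
  γ.1.map (fun n => (n : ℝ))

/-- Möbius action of a real `2×2` matrix on `ℂ`. -/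
def moeb (g : Matrix (Fin 2) (Fin 2) ℝ) (τ : ℂ) : ℂ :=
  ((g 0 0 : ℝ) * τ + (g 0 1 : ℝ)) / ((g 1 0 : ℝ) * τ + (g 1 1 : ℝ))

/-- Automorphy factor `j(g,τ) = cτ + d`. -/
def jfac (g : Matrix (Fin 2) (Fin 2) ℝ) (τ : ℂ) : ℂ :=
  ((g 1 0 : ℝ) : ℂ) * τ + ((g 1 1 : ℝ) : ℂ)

/-- `n`-th period `r_n(f) = ∫₀^∞ f(it) tⁿ dt`. -/
def periodR (f : ℂ → ℂ) (n : ℕ) : ℂ :=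
  ∫ t in Set.Ioi (0 : ℝ), f ((t : ℂ) * Complex.I) * (t : ℂ) ^ n

/-- The even period polynomial `r⁺(f;X)`. -/
def rPlus (k : ℕ) (f : ℂ → ℂ) : Polynomial ℂ :=
  ∑ m ∈ Finset.range k,
    Polynomial.C ((-1 : ℂ) ^ m * (Nat.choose (2 * k - 2) (2 * m) : ℂ) * periodR f (2 * m)) *
      Polynomial.X ^ (2 * k - 2 - 2 * m)

/-!
Near a point `τ ∉ E_D`, and with `m = k - 1`, differentiating `sgn(·) ψ(·)` shows that every
summand of `F_{1-k,D,𝒜}` satisfies `∂/∂z̄ = c (z - z̄)^(2m) conj (Q(z,1))^(-k)` with one constant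
`c` for all `Q`. Up to the factor `c`, this is also the `∂/∂z̄` of the Eichler integral of
`(z - w̄)^(2m) conj (Q(w,1)^(-k) dw)` from `τ` to `z`, so the summand is a holomorphic function plus
`c` times this integral. These decompositions can be summed, because all the series converge
uniformly near `τ`.

The integral is a polynomial of degree at most `2m` in `z` with antiholomorphic coefficients, so
`∂^(2m+1)` kills it while `ξ` and `Δ` see nothing else. For the holomorphic part `h` the quotient
`h / Q(z,1)^m` is a primitive of a multiple of `(z - τ̄)^(2m) / Q(z,1)^k`, and an identity of Bol
type evaluates the derivative of order `2m + 1` of `h`: it is a multiple of `Q(z,1)^(-k)`.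
-/

open ComplexConjugate

/-- The real-linear map `α dz + β dz̄`. -/
def wirtingerDifferential (α β : ℂ) : ℂ →L[ℝ] ℂ :=
  α • ContinuousLinearMap.id ℝ ℂ + β • (Complex.conjCLE : ℂ →L[ℝ] ℂ)

theorem wirtingerDifferential_apply (α β u : ℂ) :
    wirtingerDifferential α β u = α * u + β * conj u := rfl

/-- `G` is real differentiable at `z` with Wirtinger derivatives `∂G/∂z = α` and
`∂G/∂z̄ = β`. -/
def HasWirtingerDerivAt (G : ℂ → ℂ) (α β z : ℂ) : Prop :=
  HasFDerivAt G (wirtingerDifferential α β) z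

namespace HasWirtingerDerivAt

open Complex

variable {F G : ℂ → ℂ} {α β α' β' z : ℂ}

theorem of_hasFDerivAt {L : ℂ →L[ℝ] ℂ} (h : HasFDerivAt G L z)
    (hL : ∀ u, L u = α * u + β * conj u) : HasWirtingerDerivAt G α β z :=
  h.congr_fderiv (ContinuousLinearMap.ext hL)

theorem dxx_eq (h : HasWirtingerDerivAt G α β z) : dxx G z = α + β := by
  rw [HasWirtingerDerivAt, ← re_add_im z] at h
  have hx : HasDerivAt (fun x : ℝ => (x : ℂ) + (z.im : ℂ) * I) 1 z.re :=
    ofRealCLM.hasDerivAt.add_const _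
  refine (h.comp_hasDerivAt z.re hx).deriv.trans ?_
  rw [wirtingerDifferential_apply, map_one, mul_one, mul_one]

theorem dyy_eq (h : HasWirtingerDerivAt G α β z) : dyy G z = I * (α - β) := by
  rw [HasWirtingerDerivAt, ← re_add_im z] at h
  have hy : HasDerivAt (fun y : ℝ => (z.re : ℂ) + (y : ℂ) * I) (1 * I) z.im :=
    (ofRealCLM.hasDerivAt.mul_const _).const_add _
  refine (h.comp_hasDerivAt z.im hy).deriv.trans ?_
  rw [wirtingerDifferential_apply, one_mul, conj_I]
  ring

theorem wirD_eq (h : HasWirtingerDerivAt G α β z) : wirD G z = α := by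
  rw [wirD, h.dxx_eq, h.dyy_eq]
  linear_combination (-(α - β) / 2) * I_sq

theorem dxx_add_I_mul_dyy_eq (h : HasWirtingerDerivAt G α β z) :
    dxx G z + I * dyy G z = 2 * β := by
  rw [h.dxx_eq, h.dyy_eq]
  linear_combination (α - β) * I_sq

theorem wirDbar_eq (h : HasWirtingerDerivAt G α β z) : wirDbar G z = β := by
  rw [wirDbar, h.dxx_add_I_mul_dyy_eq, mul_div_cancel_left₀ _ two_ne_zero]

theorem of_hasDerivAt (h : HasDerivAt G α z) : HasWirtingerDerivAt G α 0 z :=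
  of_hasFDerivAt (h.hasFDerivAt.restrictScalars ℝ) fun u => by simp [mul_comm]

theorem hasDerivAt (h : HasWirtingerDerivAt G α 0 z) : HasDerivAt G α z :=
  hasDerivAt_iff_hasFDerivAt.2 <| hasFDerivAt_of_restrictScalars ℝ h <| by
    ext; simp [wirtingerDifferential_apply, mul_comm]

theorem conj_comp (h : HasWirtingerDerivAt G α β z) :
    HasWirtingerDerivAt (fun w => conj (G w)) (conj β) (conj α) z :=
  of_hasFDerivAt ((conjCLE : ℂ →L[ℝ] ℂ).hasFDerivAt.comp z h) fun u => by
    simp [wirtingerDifferential_apply, add_comm]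

theorem mul (h : HasWirtingerDerivAt F α β z) (h' : HasWirtingerDerivAt G α' β' z) :
    HasWirtingerDerivAt (fun w => F w * G w) (α * G z + F z * α') (β * G z + F z * β') z :=
  of_hasFDerivAt (HasFDerivAt.mul h h') fun u => by
    simp only [add_apply, smul_apply, smul_eq_mul, wirtingerDifferential_apply]
    ring

theorem add (h : HasWirtingerDerivAt F α β z) (h' : HasWirtingerDerivAt G α' β' z) :
    HasWirtingerDerivAt (fun w => F w + G w) (α + α') (β + β') z :=
  of_hasFDerivAt (HasFDerivAt.add h h') fun u => by
    simp only [add_apply, wirtingerDifferential_apply]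
    ring

theorem sub (h : HasWirtingerDerivAt F α β z) (h' : HasWirtingerDerivAt G α' β' z) :
    HasWirtingerDerivAt (fun w => F w - G w) (α - α') (β - β') z :=
  of_hasFDerivAt (HasFDerivAt.sub h h') fun u => by
    simp only [sub_apply, wirtingerDifferential_apply]
    ring

theorem const_mul (c : ℂ) (h : HasWirtingerDerivAt G α β z) :
    HasWirtingerDerivAt (fun w => c * G w) (c * α) (c * β) z := by
  simpa using (of_hasDerivAt (hasDerivAt_const z c)).mul h

theorem fun_sum {ι : Type*} {s : Finset ι} {G : ι → ℂ → ℂ} {α β : ι → ℂ}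
    (h : ∀ i ∈ s, HasWirtingerDerivAt (G i) (α i) (β i) z) :
    HasWirtingerDerivAt (fun w => ∑ i ∈ s, G i w) (∑ i ∈ s, α i) (∑ i ∈ s, β i) z :=
  of_hasFDerivAt (HasFDerivAt.fun_sum h) fun u => by
    simp [wirtingerDifferential_apply, Finset.sum_add_distrib, Finset.sum_mul]

theorem congr_of_eventuallyEq (h : HasWirtingerDerivAt F α β z) (hG : G =ᶠ[nhds z] F) :
    HasWirtingerDerivAt G α β z :=
  HasFDerivAt.congr_of_eventuallyEq h hG

theorem congr_deriv (h : HasWirtingerDerivAt G α β z) (hα : α = α') (hβ : β = β') :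
    HasWirtingerDerivAt G α' β' z :=
  hα ▸ hβ ▸ h

theorem comp_hasDerivAt {f : ℂ → ℂ} {f' : ℂ}
    (h : HasWirtingerDerivAt G α β z) (hf : HasDerivAt f f' (G z)) :
    HasWirtingerDerivAt (fun w => f (G w)) (f' * α) (f' * β) z :=
  of_hasFDerivAt ((hf.hasFDerivAt.restrictScalars ℝ).comp z h) fun u => by
    simp only [ContinuousLinearMap.comp_apply, ContinuousLinearMap.coe_restrictScalars',
      ContinuousLinearMap.toSpanSingleton_apply, smul_eq_mul, wirtingerDifferential_apply]
    ring

theorem ofReal_comp {ψ : ℝ → ℝ} {ψ' : ℝ} {v : ℂ → ℝ}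
    (h : HasWirtingerDerivAt (fun w => (v w : ℂ)) α (conj α) z) (hψ : HasDerivAt ψ ψ' (v z)) :
    HasWirtingerDerivAt (fun w => (ψ (v w) : ℂ)) (ψ' * α) (ψ' * conj α) z := by
  have hv : HasFDerivAt v _ z := reCLM.hasFDerivAt.comp z h
  refine of_hasFDerivAt (ofRealCLM.hasFDerivAt.comp z (hψ.hasFDerivAt.comp z hv)) fun u => ?_
  have hreal : α * u + conj α * conj u = ((α * u + conj α * conj u).re : ℂ) := by
    rw [← map_mul, add_conj, ofReal_re]
  rw [mul_assoc, mul_assoc, ← mul_add, hreal]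
  simp [wirtingerDifferential_apply, mul_comm]

theorem sub_conj (z : ℂ) : HasWirtingerDerivAt (fun w => w - conj w) 1 (-1) z := by
  have hid : HasWirtingerDerivAt id 1 0 z := of_hasDerivAt (hasDerivAt_id z)
  simpa using hid.sub hid.conj_comp

theorem ofReal_im (z : ℂ) : HasWirtingerDerivAt (fun w => (w.im : ℂ)) (-I / 2) (I / 2) z := by
  refine (((sub_conj z).const_mul (-I / 2)).congr_of_eventuallyEq (.of_forall fun w => ?_))
    |>.congr_deriv (by ring) (by ring)
  rw [im_eq_sub_conj]
  field_simp
  linear_combination (w - conj w) * I_sq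

end HasWirtingerDerivAt

open Filter Topology in
theorem dxx_dxx_add_dyy_dyy_eq {G α β : ℂ → ℂ} {z a a' b b' : ℂ}
    (hG : ∀ᶠ w in 𝓝 z, HasWirtingerDerivAt G (α w) (β w) w)
    (hα : HasWirtingerDerivAt α a a' z) (hβ : HasWirtingerDerivAt β b b' z) :
    dxx (fun w => dxx G w) z + dyy (fun w => dyy G w) z = 2 * (a' + b) := by
  have hx := (hα.add hβ).congr_of_eventuallyEq (hG.mono fun w hw => hw.dxx_eq)
  have hy := ((hα.sub hβ).const_mul Complex.I).congr_of_eventuallyEq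
    (hG.mono fun w hw => hw.dyy_eq)
  rw [hx.dxx_eq, hy.dyy_eq]
  linear_combination (a - a' - (b - b')) * Complex.I_sq

/-- The binomial expansion of `(x - a)ⁿ` in which every power `aⁱ` is replaced by `a i`
(umbral notation). With moments `a i = ∫ uⁱ dμ` it is the integral `∫ (x - u)ⁿ dμ`. -/
def umbralPow {R : Type*} [CommRing R] (n : ℕ) (a : ℕ → R) (x : R) : R :=
  ∑ j ∈ Finset.range (n + 1), n.choose j * (-1) ^ (n - j) * x ^ j * a (n - j)

section UmbralPow

open Finset

variable {R S : Type*} [CommRing R] [CommRing S]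

theorem umbralPow_pow_mul (n : ℕ) (u c x : R) :
    umbralPow n (fun i => u ^ i * c) x = (x - u) ^ n * c := by
  rw [sub_eq_add_neg, add_pow, sum_mul]
  refine sum_congr rfl fun j _ => ?_
  rw [neg_pow u]
  ring

/-- The left-hand side is the term-by-term derivative of `umbralPow n a x` in `x`. -/
theorem sum_deriv_umbralPow (n : ℕ) (a : ℕ → R) (x : R) :
    ∑ j ∈ range (n + 1), n.choose j * (-1) ^ (n - j) * (j * x ^ (j - 1)) * a (n - j) =
      n * umbralPow (n - 1) a x := by
  rcases n with - | n
  · simp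
  rw [sum_range_succ', umbralPow, mul_sum]
  simp only [Nat.cast_zero, zero_mul, mul_zero, add_zero, Nat.add_sub_cancel,
    Nat.add_sub_add_right]
  refine sum_congr rfl fun j _ => ?_
  have hchoose : ((n + 1 : ℕ) : R) * n.choose j = (n + 1).choose (j + 1) * (j + 1 : ℕ) :=
    mod_cast congrArg (Nat.cast (R := R)) (Nat.add_one_mul_choose_eq n j)
  linear_combination (-1 : R) ^ (n - j) * x ^ j * a (n - j) * -hchoose

theorem map_umbralPow (φ : R →+* S) (n : ℕ) (a : ℕ → R) (x : R) :
    φ (umbralPow n a x) = umbralPow n (fun i => φ (a i)) (φ x) := by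
  simp [umbralPow]

theorem hasSum_umbralPow [TopologicalSpace R] [IsTopologicalRing R] {ι : Type*} {a : ι → ℕ → R}
    {b : ℕ → R} (h : ∀ i, HasSum (fun q => a q i) (b i)) (n : ℕ) (x : R) :
    HasSum (fun q => umbralPow n (a q) x) (umbralPow n b x) :=
  hasSum_sum fun j _ => (h (n - j)).mul_left _

theorem norm_umbralPow_le {n : ℕ} {a : ℕ → ℂ} {x : ℂ} {M B : ℝ} (hx : ‖x‖ ≤ B)
    (ha : ∀ i, ‖a i‖ ≤ M * B ^ i) :
    ‖umbralPow n a x‖ ≤ M * (2 * B) ^ n := by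
  have hB : 0 ≤ B := (norm_nonneg x).trans hx
  calc ‖umbralPow n a x‖
      ≤ ∑ j ∈ range (n + 1), n.choose j * B ^ j * (M * B ^ (n - j)) := by
        refine norm_sum_le_of_le _ fun j _ => ?_
        simp only [norm_mul, norm_pow, norm_neg, norm_one, one_pow, mul_one, Complex.norm_natCast]
        gcongr
        exact ha _
    _ = ∑ j ∈ range (n + 1), M * (B ^ j * B ^ (n - j) * n.choose j) :=
        sum_congr rfl fun j _ => by ring
    _ = M * (2 * B) ^ n := by rw [← mul_sum, ← add_pow, two_mul]

end UmbralPow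

/-- If `A i` is a primitive of `wⁱ f(w)` vanishing at `τ`, then `eichlerIntegral n A z` is the
non-holomorphic Eichler integral of `f` from `τ`, the integral of `(z - w̄)ⁿ conj (f(w) dw)` from
`τ` to `z`. -/
def eichlerIntegral (n : ℕ) (A : ℕ → ℂ → ℂ) (z : ℂ) : ℂ :=
  umbralPow n (fun i => conj (A i z)) z

theorem hasWirtingerDerivAt_eichlerIntegral {f : ℂ → ℂ} {A : ℕ → ℂ → ℂ} {z : ℂ}
    (hA : ∀ i, HasDerivAt (A i) (z ^ i * f z) z) (n : ℕ) :
    HasWirtingerDerivAt (eichlerIntegral n A) (n * eichlerIntegral (n - 1) A z)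
      ((z - conj z) ^ n * conj (f z)) z := by
  have hterm (j : ℕ) : HasWirtingerDerivAt
      (fun w => n.choose j * (-1) ^ (n - j) * (w ^ j * conj (A (n - j) w)))
      (n.choose j * (-1) ^ (n - j) * (j * z ^ (j - 1) * conj (A (n - j) z)))
      (n.choose j * (-1) ^ (n - j) * (z ^ j * conj (z ^ (n - j) * f z))) z :=
    (((HasWirtingerDerivAt.of_hasDerivAt (hasDerivAt_pow j z)).mul
      (HasWirtingerDerivAt.of_hasDerivAt (hA (n - j))).conj_comp).const_mul _).congr_deriv
        (by simp) (by simp)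
  refine (HasWirtingerDerivAt.fun_sum (s := Finset.range (n + 1)) fun j _ => hterm j)
    |>.congr_of_eventuallyEq (.of_forall fun w => ?_) |>.congr_deriv ?_ ?_
  · simp only [eichlerIntegral, umbralPow, mul_assoc]
  · rw [eichlerIntegral, ← sum_deriv_umbralPow]
    exact Finset.sum_congr rfl fun j _ => by ring
  · rw [← umbralPow_pow_mul]
    refine Finset.sum_congr rfl fun j _ => ?_
    rw [map_mul, map_pow]
    ring

section EichlerPart

variable {U : Set ℂ} {G H f : ℂ → ℂ} {A : ℕ → ℂ → ℂ} {n : ℕ} {c z : ℂ}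

theorem HasWirtingerDerivAt.add_eichlerIntegral {H' : ℂ} (hH : HasDerivAt H H' z)
    (hA : ∀ i, HasDerivAt (A i) (z ^ i * f z) z) :
    HasWirtingerDerivAt (fun w => H w + c * eichlerIntegral n A w)
      (H' + c * (n * eichlerIntegral (n - 1) A z)) (c * ((z - conj z) ^ n * conj (f z))) z :=
  ((of_hasDerivAt hH).add ((hasWirtingerDerivAt_eichlerIntegral hA n).const_mul c)).congr_deriv
    rfl (zero_add _)

theorem differentiableOn_iteratedDeriv (hU : IsOpen U) (hH : DifferentiableOn ℂ H U) (N : ℕ) :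
    DifferentiableOn ℂ (iteratedDeriv N H) U := by
  induction N with
  | zero => simpa using hH
  | succ N ih => rw [iteratedDeriv_succ]; exact ih.deriv hU

theorem hasDerivAt_iteratedDeriv (hU : IsOpen U) (hH : DifferentiableOn ℂ H U)
    (hz : z ∈ U) (N : ℕ) :
    HasDerivAt (iteratedDeriv N H) (iteratedDeriv (N + 1) H z) z := by
  rw [iteratedDeriv_succ]
  exact ((differentiableOn_iteratedDeriv hU hH N).differentiableAt (hU.mem_nhds hz)).hasDerivAt

theorem iterate_Dop_eq_of_eqOn (hU : IsOpen U) (hH : DifferentiableOn ℂ H U)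
    (hA : ∀ i, ∀ z ∈ U, HasDerivAt (A i) (z ^ i * f z) z)
    (hG : Set.EqOn G (fun z => H z + c * eichlerIntegral n A z) U) (N : ℕ) (hz : z ∈ U) :
    (Dop^[N] G) z = (1 / (2 * Real.pi * Complex.I)) ^ N *
      (iteratedDeriv N H z + c * n.descFactorial N * eichlerIntegral (n - N) A z) := by
  induction N generalizing z with
  | zero => simpa using hG hz
  | succ N ih =>
    have hstep := ((HasWirtingerDerivAt.add_eichlerIntegral (n := n - N)
      (c := c * n.descFactorial N) (hasDerivAt_iteratedDeriv hU hH hz N)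
        fun i => hA i z hz).const_mul ((1 / (2 * Real.pi * Complex.I)) ^ N)).congr_of_eventuallyEq
          (Filter.eventually_of_mem (hU.mem_nhds hz) fun w hw => ih hw)
    rw [Function.iterate_succ_apply', Dop, hstep.wirD_eq, Nat.descFactorial_succ, Nat.sub_sub]
    push_cast
    ring

theorem iterate_Dop_succ_eq_of_eqOn (hU : IsOpen U) (hH : DifferentiableOn ℂ H U)
    (hA : ∀ i, ∀ z ∈ U, HasDerivAt (A i) (z ^ i * f z) z)
    (hG : Set.EqOn G (fun z => H z + c * eichlerIntegral n A z) U) (hz : z ∈ U) :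
    (Dop^[n + 1] G) z =
      (1 / (2 * Real.pi * Complex.I)) ^ (n + 1) * iteratedDeriv (n + 1) H z := by
  simp [iterate_Dop_eq_of_eqOn hU hH hA hG (n + 1) hz]

theorem hasWirtingerDerivAt_of_eqOn (hU : IsOpen U) (hH : DifferentiableOn ℂ H U)
    (hA : ∀ i, ∀ z ∈ U, HasDerivAt (A i) (z ^ i * f z) z)
    (hG : Set.EqOn G (fun z => H z + c * eichlerIntegral n A z) U) (hz : z ∈ U) :
    HasWirtingerDerivAt G (deriv H z + c * (n * eichlerIntegral (n - 1) A z))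
      (c * ((z - conj z) ^ n * conj (f z))) z :=
  (HasWirtingerDerivAt.add_eichlerIntegral
    (hH.differentiableAt (hU.mem_nhds hz)).hasDerivAt fun i => hA i z hz).congr_of_eventuallyEq
      (hG.eventuallyEq_of_mem (hU.mem_nhds hz))

theorem sub_conj_pow_two_mul (m : ℕ) (z : ℂ) :
    (z - conj z) ^ (2 * m) = (-4) ^ m * (z.im : ℂ) ^ (2 * m) := by
  rw [pow_mul, Complex.sub_conj, pow_mul, ← mul_pow]
  congr 1
  push_cast
  linear_combination 4 * (z.im : ℂ) ^ 2 * Complex.I_sq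

theorem xiOp_eq_of_eqOn {m : ℕ} (hU : IsOpen U) (hH : DifferentiableOn ℂ H U)
    (hA : ∀ i, ∀ z ∈ U, HasDerivAt (A i) (z ^ i * f z) z)
    (hG : Set.EqOn G (fun z => H z + c * eichlerIntegral (2 * m) A z) U) (hz : z ∈ U)
    (hz0 : z.im ≠ 0) :
    xiOp (m + 1) G z = 2 * Complex.I * (-4) ^ m * conj c * f z := by
  have hy : (z.im : ℂ) ^ ((2 : ℤ) - 2 * ((m + 1 : ℕ) : ℤ)) * (z.im : ℂ) ^ (2 * m) = 1 := by
    rw [← zpow_natCast, ← zpow_add₀ (mod_cast hz0)]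
    push_cast
    ring_nf
    exact zpow_zero _
  rw [xiOp, (hasWirtingerDerivAt_of_eqOn hU hH hA hG hz).wirDbar_eq, sub_conj_pow_two_mul]
  simp only [map_mul, map_pow, map_neg, map_ofNat, Complex.conj_ofReal, Complex.conj_conj]
  linear_combination 2 * Complex.I * (-4) ^ m * conj c * f z * hy

theorem DeltaOp_eq_zero_of_eqOn {m : ℕ} (hU : IsOpen U) (hH : DifferentiableOn ℂ H U)
    (hf : DifferentiableOn ℂ f U)
    (hA : ∀ i, ∀ z ∈ U, HasDerivAt (A i) (z ^ i * f z) z)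
    (hG : Set.EqOn G (fun z => H z + c * eichlerIntegral (2 * m) A z) U) (hz : z ∈ U) :
    DeltaOp (m + 1) G z = 0 := by
  have hG' {w : ℂ} (hw : w ∈ U) := hasWirtingerDerivAt_of_eqOn hU hH hA hG hw
  have hα := HasWirtingerDerivAt.add_eichlerIntegral (n := 2 * m - 1) (c := c * (2 * m : ℕ))
    (by simpa using hasDerivAt_iteratedDeriv hU hH hz 1) fun i => hA i z hz
  have hβ := (((HasWirtingerDerivAt.sub_conj z).comp_hasDerivAt (hasDerivAt_pow (2 * m) _)).mul
    (HasWirtingerDerivAt.of_hasDerivAt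
      (hf.differentiableAt (hU.mem_nhds hz)).hasDerivAt).conj_comp).const_mul c
  have hΔ := dxx_dxx_add_dyy_dyy_eq (Filter.eventually_of_mem (hU.mem_nhds hz) fun w => hG')
    (by simpa only [mul_assoc] using hα) hβ
  rw [DeltaOp, hΔ, (hG' hz).dxx_add_I_mul_dyy_eq, map_zero]
  rcases m with - | m
  · simp
  · rw [show 2 * (m + 1) - 1 = 2 * m + 1 from rfl, show 2 * (m + 1) = 2 * m + 1 + 1 from rfl,
      pow_succ _ (2 * m + 1), Complex.sub_conj]
    push_cast
    linear_combination -8 * (m + 1) * z.im ^ 2 * c * (2 * z.im * Complex.I) ^ (2 * m + 1) *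
      conj (f z) * Complex.I_sq

end EichlerPart

section Bol

open Polynomial Finset

variable {U : Set ℂ} {g h S : ℂ → ℂ} {p P Q : ℂ[X]} {m n : ℕ} {w z : ℂ}

theorem iteratedDeriv_eval (p : ℂ[X]) (n : ℕ) :
    iteratedDeriv n (fun z => p.eval z) = fun z => (derivative^[n] p).eval z := by
  induction n with
  | zero => simp
  | succ n ih =>
    ext z
    rw [iteratedDeriv_succ, ih, Polynomial.deriv, Function.iterate_succ_apply']

theorem iteratedDeriv_eval_mul (p : ℂ[X]) (hg : AnalyticAt ℂ g z) (n : ℕ) :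
    iteratedDeriv n (fun z => p.eval z * g z) z =
      ∑ i ∈ range (n + 1), n.choose i * (derivative^[i] p).eval z * iteratedDeriv (n - i) g z := by
  have hp := p.differentiable.analyticAt z
  refine (iteratedDeriv_fun_mul hp.contDiffAt hg.contDiffAt).trans ?_
  simp only [iteratedDeriv_eval]

theorem iteratedDeriv_eval_mul_of_natDegree_le_two (hp : p.natDegree ≤ 2)
    (hg : AnalyticAt ℂ g z) (n : ℕ) :
    iteratedDeriv n (fun z => p.eval z * g z) z =
      p.eval z * iteratedDeriv n g z + n * (derivative p).eval z * iteratedDeriv (n - 1) g z +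
        n.choose 2 * (derivative (derivative p)).eval z * iteratedDeriv (n - 2) g z := by
  rw [iteratedDeriv_eval_mul p hg]
  trans ∑ i ∈ range 3, n.choose i * (derivative^[i] p).eval z * iteratedDeriv (n - i) g z
  · refine sum_congr_of_eq_on_inter (fun i _ hi => ?_) (fun i _ hi => ?_) fun _ _ _ => rfl
    · rw [mem_range, not_lt] at hi
      simp [iterate_derivative_eq_zero (show p.natDegree < i by omega)]
    · rw [mem_range, not_lt] at hi
      simp [Nat.choose_eq_zero_of_lt (show n < i by omega)]
  · simp [sum_range_succ]

/-- With `N = 2m + 1`, the choice of exponents makes the terms in `Q''` cancel when the equation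
`Q h' = m Q' h + P` is differentiated `N` times. -/
theorem eval_mul_iteratedDeriv_add_eq_zero (hU : IsOpen U) (hz : z ∈ U) (hQ : Q.natDegree ≤ 2)
    (hP : P.natDegree ≤ 2 * m) (hh : DifferentiableOn ℂ h U)
    (hode : ∀ z ∈ U, Q.eval z * deriv h z = m * ((derivative Q).eval z * h z) + P.eval z) :
    Q.eval z * iteratedDeriv (2 * m + 2) h z +
      (m + 1) * (derivative Q).eval z * iteratedDeriv (2 * m + 1) h z = 0 := by
  have hhz : AnalyticAt ℂ h z := hh.analyticOnNhd hU z hz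
  have hQ' : (derivative Q).natDegree ≤ 1 := (natDegree_derivative_le Q).trans (by omega)
  have hQ'' : derivative (derivative (derivative Q)) = 0 :=
    iterate_derivative_eq_zero (x := 3) (by omega)
  have hsum := Set.EqOn.iteratedDeriv_of_isOpen hode hU (2 * m + 1) hz
  have hQh : AnalyticAt ℂ (fun z => (derivative Q).eval z * h z) z :=
    ((derivative Q).differentiable.analyticAt z).mul hhz
  rw [iteratedDeriv_eval_mul_of_natDegree_le_two hQ hhz.deriv, iteratedDeriv_fun_add
      (contDiffAt_const.mul hQh.contDiffAt) (P.differentiable.analyticAt z).contDiffAt,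
    iteratedDeriv_const_mul_field,
    iteratedDeriv_eval_mul_of_natDegree_le_two (hQ'.trans one_le_two) hhz, iteratedDeriv_eval,
    iterate_derivative_eq_zero (show P.natDegree < 2 * m + 1 by omega), hQ'',
    ← iteratedDeriv_succ', show 2 * m + 1 - 1 = 2 * m from rfl, ← iteratedDeriv_succ',
    Nat.cast_choose_two] at hsum
  rcases m with - | m
  · simpa using hsum
  · rw [← iteratedDeriv_succ'] at hsum
    simp only [eval_zero, add_zero, mul_zero, show 2 * (m + 1) + 1 - 2 + 1 = 2 * (m + 1) by omega]
      at hsum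
    push_cast at hsum ⊢
    linear_combination hsum

/-- The derivative of order `2m + 1` of `Q ^ m * S` for a quadratic polynomial `Q` and a primitive
`S` of `R`, expanded by the Leibniz rule. It is defined wherever `R` is. -/
def bolSum (m : ℕ) (Q : ℂ[X]) (R : ℂ → ℂ) (z : ℂ) : ℂ :=
  ∑ i ∈ range (2 * m + 1),
    (2 * m + 1).choose i * (derivative^[i] (Q ^ m)).eval z * iteratedDeriv (2 * m - i) R z

theorem iteratedDeriv_pow_mul_eq_bolSum {R : ℂ → ℂ} (hU : IsOpen U) (hQ : Q.natDegree ≤ 2)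
    (hS : ∀ z ∈ U, HasDerivAt S (R z) z) (m : ℕ) (hz : z ∈ U) :
    iteratedDeriv (2 * m + 1) (fun z => Q.eval z ^ m * S z) z = bolSum m Q R z := by
  have hdiff : DifferentiableOn ℂ S U :=
    fun z hz => (hS z hz).differentiableAt.differentiableWithinAt
  have hdeg : (Q ^ m).natDegree < 2 * m + 1 := by
    have := natDegree_pow_le_of_le m hQ
    omega
  simp only [← eval_pow]
  rw [iteratedDeriv_eval_mul _ (hdiff.analyticOnNhd hU z hz), sum_range_succ,
    iterate_derivative_eq_zero hdeg, eval_zero, mul_zero, zero_mul, add_zero]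
  refine sum_congr rfl fun i hi => ?_
  rw [show 2 * m + 1 - i = 2 * m - i + 1 by grind, iteratedDeriv_succ',
    Set.EqOn.iteratedDeriv_of_isOpen (fun z hz => (hS z hz).deriv) hU _ hz]

theorem hasDerivAt_bolSum (hQ : Q.natDegree ≤ 2) (hP : P.natDegree ≤ 2 * m)
    (hz : Q.eval z ≠ 0) :
    HasDerivAt
      (fun z => Q.eval z ^ (m + 1) * bolSum m Q (fun z => P.eval z / Q.eval z ^ (m + 1)) z)
      0 z := by
  obtain ⟨r, hr, hball⟩ := Metric.mem_nhds_iff.1 (Q.continuous.continuousAt.eventually_ne hz)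
  have hz' : z ∈ Metric.ball z r := Metric.mem_ball_self hr
  have hQd (w : ℂ) := Q.hasDerivAt w
  have hR : DifferentiableOn ℂ (fun z => P.eval z / Q.eval z ^ (m + 1)) (Metric.ball z r) :=
    P.differentiable.differentiableOn.div (Q.differentiable.differentiableOn.pow _)
      fun w hw => pow_ne_zero _ (hball hw)
  obtain ⟨S, hS⟩ := hR.isExactOn_ball
  have hh : ∀ w ∈ Metric.ball z r, HasDerivAt (fun z => Q.eval z ^ m * S z) _ w :=
    fun w hw => ((hQd w).pow m).mul (hS w hw)
  have hhd : DifferentiableOn ℂ (fun z => Q.eval z ^ m * S z) (Metric.ball z r) :=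
    fun w hw => (hh w hw).differentiableAt.differentiableWithinAt
  have hode := eval_mul_iteratedDeriv_add_eq_zero Metric.isOpen_ball hz' hQ hP hhd
    fun w hw => by
      have hQw : Q.eval w ≠ 0 := hball hw
      rw [(hh w hw).deriv]
      rcases m with - | m
      · simp only [CharP.cast_eq_zero, zero_tsub, pow_zero, mul_one, zero_mul, Pi.one_apply,
          zero_add, pow_one, one_mul]
        field_simp
      · simp only [Nat.cast_add, Nat.cast_one, add_tsub_cancel_right, Pi.pow_apply]
        field_simp
        ring
  have hderiv := ((hQd z).pow (m + 1)).mul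
    (hasDerivAt_iteratedDeriv Metric.isOpen_ball hhd hz' (2 * m + 1))
  refine (hderiv.congr_of_eventuallyEq ?_).congr_deriv ?_
  · filter_upwards [Metric.isOpen_ball.mem_nhds hz'] with w hw
    rw [← iteratedDeriv_pow_mul_eq_bolSum Metric.isOpen_ball hQ hS m hw]
    rfl
  · simp only [Nat.cast_add, Nat.cast_one, add_tsub_cancel_right, Pi.pow_apply]
    linear_combination Q.eval z ^ m * hode

theorem iteratedDeriv_sub_pow_mul (hg : AnalyticAt ℂ g w) (hn : n ≤ m) :
    iteratedDeriv n (fun z => (z - w) ^ m * g z) w = if n = m then m.factorial * g w else 0 := by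
  have hpow (z : ℂ) : (z - w) ^ m = ((X - C w) ^ m).eval z := by simp
  simp only [hpow]
  rw [iteratedDeriv_eval_mul _ hg, sum_eq_single n]
  · rw [iterate_derivative_X_sub_pow]
    split_ifs with h
    · simp [h, Nat.descFactorial_self]
    · simp [Nat.sub_ne_zero_of_lt (hn.lt_of_ne h)]
  · intro i hi hin
    rw [iterate_derivative_X_sub_pow]
    simp [show m - i ≠ 0 by grind]
  · simp

theorem bolSum_self (hg : AnalyticAt ℂ g w) (m : ℕ) (Q : ℂ[X]) :
    bolSum m Q (fun z => (z - w) ^ (2 * m) * g z) w =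
      Q.eval w ^ m * ((2 * m).factorial * g w) := by
  rw [bolSum, sum_eq_single 0]
  · simp [iteratedDeriv_sub_pow_mul hg]
  · intro i _ hi
    rw [iteratedDeriv_sub_pow_mul hg (Nat.sub_le _ _), if_neg (by grind), mul_zero]
  · simp

theorem iteratedDeriv_pow_mul_of_hasDerivAt (hU : IsOpen U) (hQ : Q.natDegree ≤ 2)
    (hQU : ∀ z ∈ U, Q.eval z ≠ 0) (hw : Q.eval w ≠ 0) (m : ℕ) (K : ℂ)
    (hS : ∀ z ∈ U, HasDerivAt S (K * (z - w) ^ (2 * m) / Q.eval z ^ (m + 1)) z) (hz : z ∈ U) :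
    iteratedDeriv (2 * m + 1) (fun z => Q.eval z ^ m * S z) z =
      K * (2 * m).factorial * Q.eval w ^ m / Q.eval z ^ (m + 1) := by
  set P : ℂ[X] := C K * (X - C w) ^ (2 * m) with hP
  have hPz (z : ℂ) : K * (z - w) ^ (2 * m) = P.eval z := by simp [hP]
  have hPdeg : P.natDegree ≤ 2 * m := by
    rw [hP]; compute_degree
  have hV : IsOpen {z | Q.eval z ≠ 0} := isOpen_ne_fun Q.continuous continuous_const
  have hVc : IsPreconnected {z | Q.eval z ≠ 0} := by
    have hQ0 : Q ≠ 0 := by rintro rfl; simp at hw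
    convert ((Q.rootSet_finite ℂ).countable.isConnected_compl_of_one_lt_rank (E := ℂ)
      (by simp)).isPreconnected
    ext z
    simp [mem_rootSet, hQ0]
  have hconst := fun {z : ℂ} (hz : z ∈ {z | Q.eval z ≠ 0}) =>
    hasDerivAt_bolSum (m := m) hQ hPdeg hz
  have hzw := hV.is_const_of_deriv_eq_zero hVc
    (fun z hz => (hconst hz).differentiableAt.differentiableWithinAt)
    (fun z hz => (hconst hz).deriv) (hQU z hz) hw
  have hg : AnalyticAt ℂ (fun z => K / Q.eval z ^ (m + 1)) w :=
    analyticAt_const.div ((Q.differentiable.analyticAt w).pow _) (pow_ne_zero _ hw)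
  simp only [← hPz] at hzw
  rw [iteratedDeriv_pow_mul_eq_bolSum hU hQ hS m hz, eq_div_iff (pow_ne_zero _ (hQU z hz)),
    mul_comm, hzw]
  simp only [mul_comm K, mul_div_assoc]
  rw [bolSum_self hg]
  field_simp

end Bol

section Psi

variable {m : ℕ} {v : ℝ}

theorem rpow_sub_three_halves (m : ℕ) (hv : 0 < v) :
    v ^ (((m + 1 : ℕ) : ℝ) - 3 / 2) = v ^ m / √v := by
  rw [show ((m + 1 : ℕ) : ℝ) - 3 / 2 = m - 1 / 2 by push_cast; ring, Real.rpow_sub hv,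
    Real.rpow_natCast, Real.sqrt_eq_rpow]

theorem rpow_neg_one_div_two (hv : 0 ≤ v) : v ^ (-(1 : ℝ) / 2) = (√v)⁻¹ := by
  rw [neg_div, Real.rpow_neg hv, Real.sqrt_eq_rpow]

theorem continuousOn_psi_integrand (hm : 1 ≤ m) : ContinuousOn
    (fun u : ℝ => u ^ (((m + 1 : ℕ) : ℝ) - 3 / 2) * (1 - u) ^ (-(1 : ℝ) / 2)) (Set.Iio 1) := by
  intro u hu
  have hm' : (1 : ℝ) ≤ m := mod_cast hm
  refine ((Real.continuousAt_rpow_const _ _ (.inr ?_)).mul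
    (ContinuousAt.rpow_const (by fun_prop) (.inl (sub_pos.2 hu).ne'))).continuousWithinAt
  push_cast
  linarith

theorem hasDerivAt_psi (hm : 1 ≤ m) (hv : 0 < v) (hv1 : v < 1) :
    HasDerivAt (psi (m + 1)) (1 / 2 * (v ^ m / √v * (√(1 - v))⁻¹)) v := by
  have hcont := continuousOn_psi_integrand hm
  have hsub : Set.uIcc 0 v ⊆ Set.Iio 1 := by
    rw [Set.uIcc_of_le hv.le]
    exact fun u hu => hu.2.trans_lt hv1
  rw [← rpow_sub_three_halves m hv, ← rpow_neg_one_div_two (sub_pos.2 hv1).le]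
  exact (intervalIntegral.integral_hasDerivAt_right (hcont.mono hsub).intervalIntegrable
    (hcont.stronglyMeasurableAtFilter isOpen_Iio v hv1)
    (hcont.continuousAt (isOpen_Iio.mem_nhds hv1))).const_mul _

theorem abs_psi_le (hm : 1 ≤ m) (hv : 0 < v) (hv1 : v < 1) :
    |psi (m + 1) v| ≤ v ^ m * √v / √(1 - v) := by
  have hm' : (1 : ℝ) ≤ m := mod_cast hm
  have hbound : ∀ u ∈ Set.uIoc 0 v,
      ‖u ^ (((m + 1 : ℕ) : ℝ) - 3 / 2) * (1 - u) ^ (-(1 : ℝ) / 2)‖ ≤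
        v ^ m / √v * (√(1 - v))⁻¹ := by
    intro u hu
    rw [Set.uIoc_of_le hv.le] at hu
    have hu1 : 0 ≤ 1 - u := by linarith [hu.2]
    rw [← rpow_sub_three_halves m hv, ← rpow_neg_one_div_two (sub_pos.2 hv1).le,
      Real.norm_of_nonneg (mul_nonneg (Real.rpow_nonneg hu.1.le _) (Real.rpow_nonneg hu1 _))]
    refine mul_le_mul (Real.rpow_le_rpow hu.1.le hu.2 ?_)
      (Real.rpow_le_rpow_of_nonpos (sub_pos.2 hv1) (by linarith [hu.2]) (by norm_num))
      (Real.rpow_nonneg hu1 _) (Real.rpow_nonneg hv.le _)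
    push_cast
    linarith
  calc |psi (m + 1) v|
      = 1 / 2 * ‖∫ u in (0 : ℝ)..v,
          u ^ (((m + 1 : ℕ) : ℝ) - 3 / 2) * (1 - u) ^ (-(1 : ℝ) / 2)‖ := by
        rw [psi, abs_mul, Real.norm_eq_abs, abs_of_pos one_half_pos]
    _ ≤ 1 * (v ^ m / √v * (√(1 - v))⁻¹ * |v - 0|) := by
        gcongr
        · norm_num
        · exact intervalIntegral.norm_integral_le_of_norm_le_const hbound
    _ = v ^ m * √v / √(1 - v) := by
        rw [sub_zero, abs_of_pos hv]
        field_simp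
        rw [Real.sq_sqrt hv.le]

end Psi

section Form

open Complex Polynomial

variable {D : ℤ} {q : ℤ × ℤ × ℤ} {m : ℕ} {z : ℂ}

/-- The derivative `2az + b` of the polynomial `Q(z,1)`. -/
def Qder (q : ℤ × ℤ × ℤ) (z : ℂ) : ℂ := 2 * q.1 * z + q.2.1

theorem hasDerivAt_Qval (q : ℤ × ℤ × ℤ) (z : ℂ) : HasDerivAt (Qval q) (Qder q z) z := by
  refine ((((hasDerivAt_pow 2 z).const_mul (q.1 : ℂ)).add
    ((hasDerivAt_id z).const_mul (q.2.1 : ℂ))).add_const (q.2.2 : ℂ)).congr_deriv ?_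
  rw [Qder]
  ring

theorem Qval_conj (q : ℤ × ℤ × ℤ) (z : ℂ) : Qval q (conj z) = conj (Qval q z) := by simp [Qval]

theorem Qder_conj (q : ℤ × ℤ × ℤ) (z : ℂ) : Qder q (conj z) = conj (Qder q z) := by
  simp only [Qder, map_add, map_mul, map_intCast, map_ofNat]

theorem Qval_eq_eval (q : ℤ × ℤ × ℤ) :
    Qval q = fun z => (C (q.1 : ℂ) * X ^ 2 + C (q.2.1 : ℂ) * X + C (q.2.2 : ℂ)).eval z := by
  ext z
  simp [Qval]

theorem Qval_sub_I_mul_im_mul_Qder (q : ℤ × ℤ × ℤ) (z : ℂ) :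
    Qval q z - I * z.im * Qder q z = Qell q z := by
  apply Complex.ext <;> simp [Qval, Qder, Qell, normSq_apply, pow_two] <;> ring

theorem normSq_Qval (hq : q ∈ QD D) (z : ℂ) :
    normSq (Qval q z) = Qell q z ^ 2 + D * z.im ^ 2 := by
  have hdisc : (q.2.1 : ℝ) ^ 2 - 4 * q.1 * q.2.2 = D := mod_cast hq
  rw [← hdisc]
  simp only [Qval, Qell, normSq_apply, pow_two, add_re, add_im, mul_re, mul_im, intCast_re,
    intCast_im]
  ring

theorem abs_Qell_le_norm_Qval (hD : 0 < D) (hq : q ∈ QD D) (z : ℂ) :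
    |Qell q z| ≤ ‖Qval q z‖ := by
  have : (0 : ℝ) < D := mod_cast hD
  refine abs_le_of_sq_le_sq ?_ (norm_nonneg _)
  rw [← normSq_eq_norm_sq, normSq_Qval hq]
  exact le_add_of_nonneg_right (by positivity)

theorem Qval_ne_zero (hD : 0 < D) (hq : q ∈ QD D) (hL : Qell q z ≠ 0) : Qval q z ≠ 0 :=
  norm_pos_iff.1 ((abs_pos.2 hL).trans_le (abs_Qell_le_norm_Qval hD hq z))

theorem continuous_Qell (q : ℤ × ℤ × ℤ) : Continuous (Qell q) := by
  unfold Qell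
  fun_prop

theorem sign_Qell_eventuallyEq (hL : Qell q z ≠ 0) :
    ∀ᶠ w in nhds z, Real.sign (Qell q w) = Real.sign (Qell q z) := by
  have hcont := (continuous_Qell q).continuousAt (x := z)
  rcases hL.lt_or_gt with hneg | hpos
  · filter_upwards [hcont.eventually_lt_const hneg] with w hw
    rw [Real.sign_of_neg hneg, Real.sign_of_neg hw]
  · filter_upwards [hcont.eventually_const_lt hpos] with w hw
    rw [Real.sign_of_pos hpos, Real.sign_of_pos hw]

/-- The argument `Dy²/|Q(z,1)|²` at which the summand of `F_{1-k,D,𝒜}` evaluates `ψ`. -/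
def psiArg (D : ℤ) (q : ℤ × ℤ × ℤ) (z : ℂ) : ℝ :=
  D * z.im ^ 2 / normSq (Qval q z)

theorem psiArg_pos (hD : 0 < D) (hz : 0 < z.im) (hQ : Qval q z ≠ 0) : 0 < psiArg D q z := by
  have : (0 : ℝ) < D := mod_cast hD
  have := normSq_pos.2 hQ
  rw [psiArg]
  positivity

theorem one_sub_psiArg (hq : q ∈ QD D) (hQ : Qval q z ≠ 0) :
    1 - psiArg D q z = Qell q z ^ 2 / normSq (Qval q z) := by
  rw [psiArg, one_sub_div (normSq_pos.2 hQ).ne', normSq_Qval hq, add_sub_cancel_right]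

theorem psiArg_lt_one (hD : 0 < D) (hq : q ∈ QD D) (hL : Qell q z ≠ 0) : psiArg D q z < 1 := by
  have hQ := Qval_ne_zero hD hq hL
  have := normSq_pos.2 hQ
  have : 0 < 1 - psiArg D q z := by rw [one_sub_psiArg hq hQ]; positivity
  linarith

theorem sqrt_psiArg (hD : 0 < D) (hz : 0 < z.im) :
    √(psiArg D q z) = √D * z.im / ‖Qval q z‖ := by
  have hD' : (0 : ℝ) < D := mod_cast hD
  rw [psiArg, normSq_eq_norm_sq, Real.sqrt_div (by positivity), Real.sqrt_sq (norm_nonneg _),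
    Real.sqrt_mul hD'.le, Real.sqrt_sq hz.le]

theorem sqrt_one_sub_psiArg (hq : q ∈ QD D) (hQ : Qval q z ≠ 0) :
    √(1 - psiArg D q z) = |Qell q z| / ‖Qval q z‖ := by
  rw [one_sub_psiArg hq hQ, normSq_eq_norm_sq, Real.sqrt_div (sq_nonneg _),
    Real.sqrt_sq (norm_nonneg _), Real.sqrt_sq_eq_abs]

theorem hasWirtingerDerivAt_psiArg (D : ℤ) (hQ : Qval q z ≠ 0) :
    HasWirtingerDerivAt (fun w => (psiArg D q w : ℂ))
      (-I * D * z.im * Qell q z / (Qval q z ^ 2 * conj (Qval q z)))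
      (conj (-I * D * z.im * Qell q z / (Qval q z ^ 2 * conj (Qval q z)))) z := by
  have hQc : conj (Qval q z) ≠ 0 := by simpa using hQ
  have hQW := HasWirtingerDerivAt.of_hasDerivAt (hasDerivAt_Qval q z)
  have him := HasWirtingerDerivAt.ofReal_im z
  have hquot := ((him.mul him).const_mul (D : ℂ)).mul ((hQW.mul hQW.conj_comp).comp_hasDerivAt
    (hasDerivAt_inv (mul_ne_zero hQ hQc)))
  have hQell := Qval_sub_I_mul_im_mul_Qder q z
  have hQellc := congrArg conj hQell
  simp only [map_sub, map_mul, conj_I, conj_ofReal] at hQellc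
  refine (hquot.congr_of_eventuallyEq (.of_forall fun w => ?_)).congr_deriv ?_ ?_
  · rw [psiArg]
    push_cast
    rw [← mul_conj]
    ring
  · rw [← hQell, map_zero]
    field_simp
    linear_combination (-2 * D * (z.im : ℂ) ^ 2 * conj (Qval q z) * Qder q z) * I_sq
  · simp only [map_div₀, map_mul, map_neg, map_pow, conj_I, conj_ofReal, conj_conj, map_intCast]
    rw [← hQellc]
    field_simp
    linear_combination (-2 * D * (z.im : ℂ) ^ 2 * Qval q z * conj (Qder q z)) * I_sq

/-- The constant `c` for which the summand of `F_{1-k,D,𝒜}` attached to `Q` satisfies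
`∂/∂z̄ = c (z - z̄)^(2m) conj (Q(z,1))^(-m-1)`, where `m = k - 1`. -/
def eichlerConst (m : ℕ) (D : ℤ) : ℂ := I / 2 * (√D * D ^ m : ℝ) / (-4) ^ m

theorem conj_eichlerConst (m : ℕ) (D : ℤ) : conj (eichlerConst m D) = -eichlerConst m D := by
  simp only [eichlerConst, map_div₀, map_mul, conj_I, map_ofNat, conj_ofReal, map_pow, map_neg]
  ring

theorem conj_sub_conj_pow_two_mul (m : ℕ) (z : ℂ) :
    conj ((z - conj z) ^ (2 * m)) = (z - conj z) ^ (2 * m) := by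
  simp only [sub_conj_pow_two_mul, map_mul, map_pow, map_neg, map_ofNat, conj_ofReal]

theorem eichlerConst_mul_sub_conj_pow (m : ℕ) (D : ℤ) (z : ℂ) :
    eichlerConst m D * (z - conj z) ^ (2 * m) = I / 2 * (√D * D ^ m * z.im ^ (2 * m) : ℝ) := by
  rw [sub_conj_pow_two_mul, eichlerConst]
  push_cast
  field_simp

/-- The factor `sgn(a|z|² + bx + c) ψ(Dy²/|Q(z,1)|²)` of the summand of `F_{1-k,D,𝒜}`. -/
def signPsi (m : ℕ) (D : ℤ) (q : ℤ × ℤ × ℤ) (z : ℂ) : ℝ :=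
  Real.sign (Qell q z) * psi (m + 1) (psiArg D q z)

theorem Fsummand_eq (m : ℕ) (D : ℤ) (q : ℤ × ℤ × ℤ) (z : ℂ) :
    Fsummand (m + 1) D z q = Qval q z ^ m * signPsi m D q z := by
  simp only [Fsummand, signPsi, psiArg, Nat.add_sub_cancel, ofReal_mul]
  ring

theorem sign_mul_deriv_psi (hD : 0 < D) (hq : q ∈ QD D) (hz : 0 < z.im) (hL : Qell q z ≠ 0) :
    Real.sign (Qell q z) *
        (1 / 2 * (psiArg D q z ^ m / √(psiArg D q z) * (√(1 - psiArg D q z))⁻¹)) =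
      √D * D ^ m * z.im ^ (2 * m) * normSq (Qval q z) /
        (2 * D * z.im * Qell q z * normSq (Qval q z) ^ m) := by
  have hD' : (0 : ℝ) < D := mod_cast hD
  have hQ := norm_pos_iff.2 (Qval_ne_zero hD hq hL)
  have hsign : Real.sign (Qell q z) / |Qell q z| = 1 / Qell q z := by
    rcases hL.lt_or_gt with hneg | hpos
    · rw [Real.sign_of_neg hneg, abs_of_neg hneg, neg_div_neg_eq]
    · rw [Real.sign_of_pos hpos, abs_of_pos hpos]
  rw [sqrt_psiArg hD hz, sqrt_one_sub_psiArg hq (Qval_ne_zero hD hq hL), psiArg, normSq_eq_norm_sq]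
  calc _ = Real.sign (Qell q z) / |Qell q z| * (√D * D ^ m * z.im ^ (2 * m) * ‖Qval q z‖ ^ 2 /
          (2 * √D ^ 2 * z.im * (‖Qval q z‖ ^ 2) ^ m)) := by
        rw [div_pow, mul_pow]
        field_simp
        ring
    _ = _ := by
        rw [hsign, Real.sq_sqrt hD'.le]
        field_simp

theorem hasWirtingerDerivAt_signPsi (hm : 1 ≤ m) (hD : 0 < D) (hq : q ∈ QD D) (hz : 0 < z.im)
    (hL : Qell q z ≠ 0) :
    HasWirtingerDerivAt (fun w => (signPsi m D q w : ℂ))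
      (-(eichlerConst m D * (z - conj z) ^ (2 * m)) / (Qval q z ^ (m + 1) * conj (Qval q z) ^ m))
      (eichlerConst m D * (z - conj z) ^ (2 * m) / (conj (Qval q z) ^ (m + 1) * Qval q z ^ m))
      z := by
  have hQ := Qval_ne_zero hD hq hL
  have hψ := hasDerivAt_psi hm (psiArg_pos hD hz hQ) (psiArg_lt_one hD hq hL)
  have hα : Real.sign (Qell q z) *
        (1 / 2 * (psiArg D q z ^ m / √(psiArg D q z) * (√(1 - psiArg D q z))⁻¹) : ℝ) *
        (-I * D * z.im * Qell q z / (Qval q z ^ 2 * conj (Qval q z))) =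
      -(eichlerConst m D * (z - conj z) ^ (2 * m)) /
        (Qval q z ^ (m + 1) * conj (Qval q z) ^ m) := by
    have hD0 : (D : ℂ) ≠ 0 := mod_cast hD.ne'
    have hL0 : (Qell q z : ℂ) ≠ 0 := mod_cast hL
    have hz0 : (z.im : ℂ) ≠ 0 := mod_cast hz.ne'
    have hQc : conj (Qval q z) ≠ 0 := by simpa using hQ
    rw [← ofReal_mul, sign_mul_deriv_psi hD hq hz hL, eichlerConst_mul_sub_conj_pow]
    push_cast
    rw [← mul_conj, mul_pow]
    field_simp
    ring
  have hβ : conj (-(eichlerConst m D * (z - conj z) ^ (2 * m)) /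
        (Qval q z ^ (m + 1) * conj (Qval q z) ^ m)) =
      eichlerConst m D * (z - conj z) ^ (2 * m) /
        (conj (Qval q z) ^ (m + 1) * Qval q z ^ m) := by
    rw [map_div₀, map_neg, map_mul, conj_eichlerConst, conj_sub_conj_pow_two_mul, map_mul, map_pow,
      map_pow, conj_conj, neg_mul, neg_neg]
  refine ((((hasWirtingerDerivAt_psiArg D hQ).ofReal_comp hψ).const_mul
    (Real.sign (Qell q z))).congr_of_eventuallyEq ?_).congr_deriv ?_ ?_
  · filter_upwards [sign_Qell_eventuallyEq hL] with w hw
    rw [signPsi, hw, ofReal_mul]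
  · rw [← hα, mul_assoc (Real.sign (Qell q z) : ℂ)]
  · rw [← hβ, ← hα, map_mul, map_mul, conj_ofReal, conj_ofReal,
      mul_assoc (Real.sign (Qell q z) : ℂ)]

theorem norm_Fsummand_le (hm : 1 ≤ m) (hD : 0 < D) (hq : q ∈ QD D) (hz : 0 < z.im)
    (hL : Qell q z ≠ 0) :
    ‖Fsummand (m + 1) D z q‖ ≤ √D * D ^ m * z.im ^ (2 * m + 1) * (|Qell q z| ^ (m + 1))⁻¹ := by
  have hQ := Qval_ne_zero hD hq hL
  have hψ := abs_psi_le hm (psiArg_pos hD hz hQ) (psiArg_lt_one hD hq hL)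
  rw [sqrt_psiArg hD hz, sqrt_one_sub_psiArg hq hQ] at hψ
  have hsign : |Real.sign (Qell q z)| ≤ 1 := by
    rcases Real.sign_apply_eq (Qell q z) with h | h | h <;> simp [h]
  have := norm_pos_iff.2 hQ
  have := abs_pos.2 hL
  have : (0 : ℝ) < D := mod_cast hD
  rw [Fsummand_eq, signPsi, norm_mul, norm_pow, norm_real, Real.norm_eq_abs, abs_mul]
  calc ‖Qval q z‖ ^ m * (|Real.sign (Qell q z)| * |psi (m + 1) (psiArg D q z)|)
      ≤ ‖Qval q z‖ ^ m * (1 * (psiArg D q z ^ m * (√D * z.im / ‖Qval q z‖) /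
          (|Qell q z| / ‖Qval q z‖))) := by gcongr
    _ = √D * D ^ m * z.im ^ (2 * m + 1) * (‖Qval q z‖ ^ m * |Qell q z|)⁻¹ := by
        rw [psiArg, normSq_eq_norm_sq, div_pow, mul_pow]
        field_simp
        ring
    _ ≤ √D * D ^ m * z.im ^ (2 * m + 1) * (|Qell q z| ^ (m + 1))⁻¹ := by
        rw [pow_succ (|Qell q z|)]
        gcongr
        exact abs_Qell_le_norm_Qval hD hq z

end Form

section FormEichler

open Complex Polynomial

variable {D : ℤ} {q : ℤ × ℤ × ℤ} {m : ℕ} {U : Set ℂ} {τ z : ℂ} {A : ℕ → ℂ → ℂ}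

theorem two_mul_Qval_sub (q : ℤ × ℤ × ℤ) (x u : ℂ) :
    2 * Qval q x - (x - u) * Qder q x = 2 * Qval q u + (x - u) * Qder q u := by
  simp only [Qval, Qder]
  ring

/-- As functions of `u` both sides have the same derivative and vanish at `u = τ`. -/
theorem two_mul_Qval_mul_umbralPow_sub (hU : IsOpen U) (hUc : IsPreconnected U) (hτ : τ ∈ U)
    (hQ : ∀ u ∈ U, Qval q u ≠ 0)
    (hA : ∀ i, ∀ u ∈ U, HasDerivAt (A i) (u ^ i * (Qval q u ^ (m + 1))⁻¹) u)
    (hA0 : ∀ i, A i τ = 0) (x : ℂ) {u : ℂ} (hu : u ∈ U) :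
    m * (2 * Qval q x * umbralPow (2 * m - 1) (fun i => A i u) x -
        Qder q x * umbralPow (2 * m) (fun i => A i u) x) =
      (x - τ) ^ (2 * m) / Qval q τ ^ m - (x - u) ^ (2 * m) / Qval q u ^ m := by
  have humbral (n : ℕ) {w : ℂ} (hw : w ∈ U) : HasDerivAt (fun u => umbralPow n (fun i => A i u) x)
      ((x - w) ^ n * (Qval q w ^ (m + 1))⁻¹) w := by
    rw [← umbralPow_pow_mul]
    exact HasDerivAt.fun_sum fun j _ => (hA (n - j) w hw).const_mul _
  have hderiv {w : ℂ} (hw : w ∈ U) : HasDerivAt (fun u =>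
      m * (2 * Qval q x * umbralPow (2 * m - 1) (fun i => A i u) x -
        Qder q x * umbralPow (2 * m) (fun i => A i u) x) +
        (x - u) ^ (2 * m) / Qval q u ^ m) 0 w := by
    have hpow := ((hasDerivAt_id' w).const_sub x).fun_pow (2 * m)
    have hQpow := (hasDerivAt_Qval q w).fun_pow m
    refine (((((humbral (2 * m - 1) hw).const_mul (2 * Qval q x)).sub
      ((humbral (2 * m) hw).const_mul (Qder q x))).const_mul (m : ℂ)).add
        (hpow.fun_div hQpow (pow_ne_zero m (hQ w hw)))).congr_deriv ?_
    have hQw := hQ w hw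
    rcases m with - | m
    · simp
    · have := two_mul_Qval_sub q x w
      simp only [show 2 * (m + 1) - 1 = 2 * m + 1 by omega, Nat.add_sub_cancel]
      push_cast
      field_simp
      linear_combination (m + 1) * (x - w) ^ (2 * m + 1) * Qval q w ^ (2 * m + 2) * this
  have := hU.is_const_of_deriv_eq_zero hUc
    (fun w hw => (hderiv hw).differentiableAt.differentiableWithinAt)
    (fun w hw => (hderiv hw).deriv) hu hτ
  have hvanish (n : ℕ) : umbralPow n (fun _ => (0 : ℂ)) x = 0 := by simp [umbralPow]
  simp only [hA0, hvanish] at this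
  linear_combination this

theorem two_mul_Qval_mul_eichlerIntegral_sub (hU : IsOpen U) (hUc : IsPreconnected U)
    (hτ : τ ∈ U) (hQ : ∀ u ∈ U, Qval q u ≠ 0)
    (hA : ∀ i, ∀ u ∈ U, HasDerivAt (A i) (u ^ i * (Qval q u ^ (m + 1))⁻¹) u)
    (hA0 : ∀ i, A i τ = 0) (hz : z ∈ U) :
    m * (2 * Qval q z * eichlerIntegral (2 * m - 1) A z -
        Qder q z * eichlerIntegral (2 * m) A z) =
      (z - conj τ) ^ (2 * m) / conj (Qval q τ) ^ m -
        (z - conj z) ^ (2 * m) / conj (Qval q z) ^ m := by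
  have h := congrArg conj
    (two_mul_Qval_mul_umbralPow_sub hU hUc hτ hQ hA hA0 (conj z) hz)
  simpa only [Qval_conj, Qder_conj, map_mul, map_sub, map_div₀, map_pow, map_natCast, map_ofNat,
    conj_conj, map_umbralPow, eichlerIntegral] using h

/-- The summand of `F_{1-k,D,𝒜}` attached to `Q`, `k = m + 1`, corrected by a multiple of the
Eichler integral of `Q(z,1)^(-k)` so as to become holomorphic. -/
def holoSummand (m : ℕ) (D : ℤ) (q : ℤ × ℤ × ℤ) (A : ℕ → ℂ → ℂ) (z : ℂ) : ℂ :=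
  Fsummand (m + 1) D z q - eichlerConst m D * eichlerIntegral (2 * m) A z

theorem hasDerivAt_holoSummand_div (hm : 1 ≤ m) (hD : 0 < D) (hq : q ∈ QD D) (hU : IsOpen U)
    (hUc : IsPreconnected U) (hτ : τ ∈ U) (hUim : ∀ u ∈ U, 0 < u.im)
    (hL : ∀ u ∈ U, Qell q u ≠ 0)
    (hA : ∀ i, ∀ u ∈ U, HasDerivAt (A i) (u ^ i * (Qval q u ^ (m + 1))⁻¹) u)
    (hA0 : ∀ i, A i τ = 0) (hz : z ∈ U) :
    HasDerivAt (fun w => holoSummand m D q A w / Qval q w ^ m)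
      (-eichlerConst m D / conj (Qval q τ) ^ m * (z - conj τ) ^ (2 * m) / Qval q z ^ (m + 1))
      z := by
  have hQ (u : ℂ) (hu : u ∈ U) : Qval q u ≠ 0 := Qval_ne_zero hD hq (hL u hu)
  have hQz := hQ z hz
  have hQc {u : ℂ} (hu : u ∈ U) : conj (Qval q u) ≠ 0 := by simpa using hQ u hu
  have hboundary := two_mul_Qval_mul_eichlerIntegral_sub hU hUc hτ hQ hA hA0 hz
  have hinv := HasWirtingerDerivAt.of_hasDerivAt
    (((hasDerivAt_Qval q z).fun_pow m).fun_inv (pow_ne_zero m hQz))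
  refine HasWirtingerDerivAt.hasDerivAt <|
    ((hasWirtingerDerivAt_signPsi hm hD hq (hUim z hz) (hL z hz)).sub
      (((hasWirtingerDerivAt_eichlerIntegral (f := fun u => (Qval q u ^ (m + 1))⁻¹)
        (fun i => hA i z hz) (2 * m)).mul hinv).const_mul
        (eichlerConst m D))).congr_of_eventuallyEq ?_ |>.congr_deriv ?_ ?_
  · filter_upwards [hU.mem_nhds hz] with w hw
    rw [holoSummand, Fsummand_eq, sub_div, mul_div_cancel_left₀ _ (pow_ne_zero m (hQ w hw)),
      mul_div_assoc, div_eq_mul_inv]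
  · have := hQc hτ
    have := hQc hz
    obtain ⟨m, rfl⟩ := Nat.exists_eq_add_of_le' hm
    rw [Nat.add_sub_cancel]
    push_cast at hboundary ⊢
    field_simp at hboundary ⊢
    linear_combination -eichlerConst (m + 1) D * Qval q z ^ (2 * m + 2) * hboundary
  · have := hQc hz
    simp only [map_inv₀, map_pow, mul_zero, add_zero]
    field_simp
    ring

theorem iteratedDeriv_holoSummand (hm : 1 ≤ m) (hD : 0 < D) (hq : q ∈ QD D) (hU : IsOpen U)
    (hUc : IsPreconnected U) (hτ : τ ∈ U) (hUim : ∀ u ∈ U, 0 < u.im)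
    (hL : ∀ u ∈ U, Qell q u ≠ 0)
    (hA : ∀ i, ∀ u ∈ U, HasDerivAt (A i) (u ^ i * (Qval q u ^ (m + 1))⁻¹) u)
    (hA0 : ∀ i, A i τ = 0) (hz : z ∈ U) :
    iteratedDeriv (2 * m + 1) (holoSummand m D q A) z =
      -eichlerConst m D * (2 * m).factorial * (Qval q z ^ (m + 1))⁻¹ := by
  have hQ (u : ℂ) (hu : u ∈ U) : Qval q u ≠ 0 := Qval_ne_zero hD hq (hL u hu)
  have hQτ : conj (Qval q τ) ≠ 0 := by simpa using hQ τ hτ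
  have hdeg : (C (q.1 : ℂ) * X ^ 2 + C (q.2.1 : ℂ) * X + C (q.2.2 : ℂ)).natDegree ≤ 2 := by
    compute_degree
  have heval (u : ℂ) := (congrFun (Qval_eq_eval q) u).symm
  have hBol := iteratedDeriv_pow_mul_of_hasDerivAt hU hdeg (w := conj τ) (z := z)
    (S := fun w => holoSummand m D q A w / Qval q w ^ m) (by simpa only [heval] using hQ)
    (by simpa only [heval, Qval_conj] using hQτ) m (-eichlerConst m D / conj (Qval q τ) ^ m)
    (by simpa only [heval] using fun u hu =>
      hasDerivAt_holoSummand_div hm hD hq hU hUc hτ hUim hL hA hA0 hu) hz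
  simp only [heval, Qval_conj] at hBol
  have hcancel : holoSummand m D q A =ᶠ[nhds z]
      fun u => Qval q u ^ m * (holoSummand m D q A u / Qval q u ^ m) := by
    filter_upwards [hU.mem_nhds hz] with u hu
    rw [mul_div_cancel₀ _ (pow_ne_zero m (hQ u hu))]
  rw [hcancel.iteratedDeriv_eq, hBol]
  field_simp

theorem differentiableOn_holoSummand (hm : 1 ≤ m) (hD : 0 < D) (hq : q ∈ QD D) (hU : IsOpen U)
    (hUc : IsPreconnected U) (hτ : τ ∈ U) (hUim : ∀ u ∈ U, 0 < u.im)
    (hL : ∀ u ∈ U, Qell q u ≠ 0)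
    (hA : ∀ i, ∀ u ∈ U, HasDerivAt (A i) (u ^ i * (Qval q u ^ (m + 1))⁻¹) u)
    (hA0 : ∀ i, A i τ = 0) : DifferentiableOn ℂ (holoSummand m D q A) U := by
  intro z hz
  have h := ((hasDerivAt_Qval q z).fun_pow m).mul
    (hasDerivAt_holoSummand_div hm hD hq hU hUc hτ hUim hL hA hA0 hz)
  refine (h.differentiableAt.congr_of_eventuallyEq ?_).differentiableWithinAt
  filter_upwards [hU.mem_nhds hz] with u hu
  rw [Pi.mul_apply, mul_div_cancel₀ _ (pow_ne_zero m (Qval_ne_zero hD hq (hL u hu)))]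

end FormEichler

section Counting

open Finset

theorem succ_pow_three_le (e : ℕ) : (e + 1) ^ 3 ≤ 8 * 2 ^ e := by
  induction e with
  | zero => norm_num
  | succ e ih =>
    rcases lt_or_ge e 3 with he | he
    · interval_cases e <;> norm_num
    · calc (e + 1 + 1) ^ 3 ≤ 2 * (e + 1) ^ 3 := by nlinarith [Nat.mul_le_mul he he]
        _ ≤ 2 * (8 * 2 ^ e) := by gcongr
        _ = 8 * 2 ^ (e + 1) := by ring

theorem succ_pow_three_le_pow {p : ℕ} (hp : 8 ≤ p) (e : ℕ) : (e + 1) ^ 3 ≤ p ^ e :=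
  calc (e + 1) ^ 3 ≤ (2 ^ e) ^ 3 := Nat.pow_le_pow_left Nat.lt_two_pow_self _
    _ = 8 ^ e := by rw [← pow_mul, mul_comm, pow_mul]; norm_num
    _ ≤ p ^ e := Nat.pow_le_pow_left hp e

theorem card_divisors_pow_three_le {n : ℕ} (hn : n ≠ 0) : #n.divisors ^ 3 ≤ 8 ^ 8 * n := by
  have hfactor (p : ℕ) (hp : p ∈ n.primeFactors) : (n.factorization p + 1) ^ 3 ≤
      (if p < 8 then 8 else 1) * p ^ n.factorization p := by
    split_ifs with h
    · exact (succ_pow_three_le _).trans (Nat.mul_le_mul_left _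
        (Nat.pow_le_pow_left (Nat.prime_of_mem_primeFactors hp).two_le _))
    · simpa using succ_pow_three_le_pow (not_lt.1 h) _
  have hcard : #{p ∈ n.primeFactors | p < 8} ≤ 8 := by
    simpa using card_le_card fun p hp => mem_range.2 (mem_filter.1 hp).2
  have hn' : ∏ p ∈ n.primeFactors, p ^ n.factorization p = n :=
    Nat.prod_factorization_pow_eq_self hn
  calc #n.divisors ^ 3 = ∏ p ∈ n.primeFactors, (n.factorization p + 1) ^ 3 := by
        rw [Nat.card_divisors hn, prod_pow]
    _ ≤ ∏ p ∈ n.primeFactors, (if p < 8 then 8 else 1) * p ^ n.factorization p :=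
        prod_le_prod' hfactor
    _ = 8 ^ #{p ∈ n.primeFactors | p < 8} * n := by
        rw [prod_mul_distrib, hn', prod_ite, prod_const_one, mul_one, prod_const]
    _ ≤ 8 ^ 8 * n := by gcongr; norm_num

theorem card_divisors_le_rpow (n : ℕ) : (#n.divisors : ℝ) ≤ 256 * (n : ℝ) ^ (1 / 3 : ℝ) := by
  rcases eq_or_ne n 0 with rfl | hn
  · simp
  have hcube : (#n.divisors : ℝ) ^ 3 ≤ (256 * (n : ℝ) ^ (1 / 3 : ℝ)) ^ 3 := by
    rw [mul_pow, ← Real.rpow_natCast ((n : ℝ) ^ (1 / 3 : ℝ)), ← Real.rpow_mul n.cast_nonneg]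
    rw [show (1 / 3 : ℝ) * (3 : ℕ) = 1 by norm_num, Real.rpow_one,
      show (256 : ℝ) ^ 3 = 8 ^ 8 by norm_num]
    exact_mod_cast card_divisors_pow_three_le hn
  exact le_of_pow_le_pow_left₀ three_ne_zero (by positivity) hcube

theorem card_int_divisors (n : ℤ) : #n.divisors = 2 * #n.natAbs.divisors := by
  rw [Int.divisors, card_disjUnion, card_map, card_map, two_mul]

theorem card_int_divisors_sq_sub_le (D : ℤ) {b : ℤ} (hb : b ≠ 0) :
    (#(b ^ 2 - D).divisors : ℝ) ≤
      512 * (1 + |(D : ℝ)|) ^ (1 / 3 : ℝ) * |(b : ℝ)| ^ (2 / 3 : ℝ) := by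
  have hb1 : (1 : ℝ) ≤ |(b : ℝ)| := mod_cast Int.one_le_abs hb
  have hle : ((b ^ 2 - D).natAbs : ℝ) ≤ (1 + |(D : ℝ)|) * |(b : ℝ)| ^ 2 := by
    rw [Nat.cast_natAbs, Int.cast_abs]
    push_cast
    calc |(b : ℝ) ^ 2 - D| ≤ |(b : ℝ) ^ 2| + |(D : ℝ)| * 1 := by rw [mul_one]; exact abs_sub _ _
      _ ≤ |(b : ℝ) ^ 2| + |(D : ℝ)| * |(b : ℝ)| ^ 2 := by gcongr; exact one_le_pow₀ hb1
      _ = _ := by rw [abs_pow]; ring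
  rw [card_int_divisors, Nat.cast_mul, Nat.cast_two]
  calc 2 * (#(b ^ 2 - D).natAbs.divisors : ℝ)
      ≤ 2 * (256 * ((1 + |(D : ℝ)|) * |(b : ℝ)| ^ 2) ^ (1 / 3 : ℝ)) := by
        gcongr
        exact (card_divisors_le_rpow _).trans (by gcongr)
    _ = _ := by
        rw [Real.mul_rpow (by positivity) (by positivity), ← Real.rpow_natCast,
          ← Real.rpow_mul (abs_nonneg _), show ((2 : ℕ) : ℝ) * (1 / 3) = 2 / 3 by norm_num]
        ring

theorem summable_card_int_divisors_sq_sub (D : ℤ) :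
    Summable fun b : ℤ => (#(b ^ 2 - D).divisors : ℝ) * ((max 1 |(b : ℝ)|) ^ 2)⁻¹ := by
  refine ((Real.summable_abs_int_rpow (b := 4 / 3) (by norm_num)).mul_left
    (512 * (1 + |(D : ℝ)|) ^ (1 / 3 : ℝ))).of_norm_bounded_eventually ?_
  filter_upwards [(Set.finite_singleton (0 : ℤ)).eventually_cofinite_notMem] with b hb
  have hb1 : (1 : ℝ) ≤ |(b : ℝ)| := mod_cast Int.one_le_abs hb
  have hb0 : 0 < |(b : ℝ)| := one_pos.trans_le hb1
  rw [Real.norm_of_nonneg (by positivity), max_eq_right hb1, ← Real.rpow_natCast,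
    ← Real.rpow_neg hb0.le]
  calc _ ≤ 512 * (1 + |(D : ℝ)|) ^ (1 / 3 : ℝ) * |(b : ℝ)| ^ (2 / 3 : ℝ) *
        |(b : ℝ)| ^ (-((2 : ℕ) : ℝ)) := by
        gcongr
        exact card_int_divisors_sq_sub_le D hb
    _ = _ := by
        rw [mul_assoc, ← Real.rpow_add hb0]
        norm_num

variable {D : ℤ} {q : ℤ × ℤ × ℤ}

theorem fst_ne_zero_of_mem_QD (hDsq : ¬∃ m : ℤ, m ^ 2 = D) (hq : q ∈ QD D) : q.1 ≠ 0 := by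
  rintro h
  exact hDsq ⟨q.2.1, by simpa [QD, h] using hq⟩

theorem max_one_abs_le_norm (hDsq : ¬∃ m : ℤ, m ^ 2 = D) (hq : q ∈ QD D) :
    max 1 |(q.2.1 : ℝ)| ≤ ‖q‖ := by
  refine max_le (le_trans ?_ (norm_fst_le q)) ((norm_fst_le q.2).trans (norm_snd_le q))
  rw [Int.norm_eq_abs]
  exact mod_cast Int.one_le_abs (fst_ne_zero_of_mem_QD hDsq hq)

theorem summable_norm_sq_inv_QD (hDsq : ¬∃ m : ℤ, m ^ 2 = D) :
    Summable fun q : QD D => (‖(q : ℤ × ℤ × ℤ)‖ ^ 2)⁻¹ := by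
  have hsigma : Summable fun p : Σ b : ℤ, (b ^ 2 - D).divisors => ((max 1 |(p.1 : ℝ)|) ^ 2)⁻¹ :=
    (summable_sigma_of_nonneg fun _ => by positivity).2
      ⟨fun _ => Summable.of_finite, by simpa using summable_card_int_divisors_sq_sub D⟩
  have hmem (q : QD D) : (q : ℤ × ℤ × ℤ).1 ∈ ((q : ℤ × ℤ × ℤ).2.1 ^ 2 - D).divisors :=
    Int.mem_divisors.2 ⟨⟨4 * (q : ℤ × ℤ × ℤ).2.2, by linear_combination q.2.out⟩,
      fun h => hDsq ⟨_, sub_eq_zero.1 h⟩⟩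
  let toSigma (q : QD D) : Σ b : ℤ, (b ^ 2 - D).divisors := ⟨(q : ℤ × ℤ × ℤ).2.1, _, hmem q⟩
  have hinj : Function.Injective toSigma := by
    rintro ⟨⟨a, b, c⟩, hq⟩ ⟨⟨a', b', c'⟩, hq'⟩ h
    obtain ⟨rfl, h⟩ := Sigma.mk.inj_iff.1 h
    obtain rfl : a = a' := by simpa using h
    have ha := fst_ne_zero_of_mem_QD hDsq hq
    have hc : a * c = a * c' := by
      have : b ^ 2 - 4 * a * c = b ^ 2 - 4 * a * c' := hq.out.trans hq'.out.symm
      linarith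
    obtain rfl := mul_left_cancel₀ ha hc
    rfl
  refine (hsigma.comp_injective hinj).of_nonneg_of_le (fun _ => by positivity) fun q => ?_
  have := max_one_abs_le_norm hDsq q.2
  simp only [Function.comp_apply, toSigma]
  gcongr

theorem summable_norm_pow_inv (hDsq : ¬∃ m : ℤ, m ^ 2 = D) {k : ℕ} (hk : 2 ≤ k)
    {𝒜 : Set (ℤ × ℤ × ℤ)} (h𝒜 : 𝒜 ⊆ QD D) :
    Summable fun q : 𝒜 => (‖(q : ℤ × ℤ × ℤ)‖ ^ k)⁻¹ := by
  refine ((summable_norm_sq_inv_QD hDsq).comp_injective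
    (Set.inclusion_injective h𝒜)).of_nonneg_of_le (fun _ => by positivity) fun q => ?_
  have := (le_max_left _ _).trans (max_one_abs_le_norm hDsq (h𝒜 q.2))
  simp only [Function.comp_apply]
  gcongr

end Counting

section Geometry

open Asymptotics Filter Topology

variable {D : ℤ} {q : ℤ × ℤ × ℤ} {τ z : ℂ}

theorem norm_Qval_le (hD : 0 < D) (hq : q ∈ QD D) (hz : 0 < z.im) :
    ‖Qval q z‖ ≤ |Qell q z| + √D * z.im := by
  have hD' : (0 : ℝ) < D := mod_cast hD
  refine abs_le_of_sq_le_sq' ?_ (by positivity) |>.2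
  rw [← Complex.normSq_eq_norm_sq, normSq_Qval hq, add_sq, sq_abs, mul_pow, Real.sq_sqrt hD'.le]
  have : 0 ≤ 2 * |Qell q z| * (√D * z.im) := by positivity
  linarith

theorem isBigO_Qval (hD : 0 < D) (hz : 0 < z.im) :
    (fun q => Qval q z) =O[𝓟 (QD D)] fun q => |Qell q z| + 1 := by
  refine .of_bound (1 + √D * z.im) (eventually_principal.2 fun q hq => ?_)
  rw [Real.norm_of_nonneg (by positivity)]
  have := norm_Qval_le hD hq hz
  have : 0 ≤ √D * z.im := by positivity
  nlinarith [abs_nonneg (Qell q z)]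

theorem isBigO_Qder (hD : 0 < D) (hz : 0 < z.im) :
    (fun q => Qder q z) =O[𝓟 (QD D)] fun q => |Qell q z| + 1 := by
  have hz0 : (z.im : ℂ) ≠ 0 := mod_cast hz.ne'
  have hell : (fun q => (Qell q z : ℂ)) =O[𝓟 (QD D)] fun q => |Qell q z| + 1 :=
    .of_bound 1 (.of_forall fun q => by
      rw [Complex.norm_real, Real.norm_eq_abs, Real.norm_of_nonneg (by positivity)]
      linarith)
  refine (((isBigO_Qval hD hz).sub hell).const_mul_left (Complex.I * z.im)⁻¹).congr_left
    fun q => ?_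
  rw [← Qval_sub_I_mul_im_mul_Qder, sub_sub_cancel]
  field_simp

theorem isBigO_abs_Qell_add_one (hD : 0 < D) (hz : 0 < z.im) :
    (fun q => q) =O[𝓟 (QD D)] fun q => |Qell q z| + 1 := by
  have ha : (fun q : ℤ × ℤ × ℤ => (q.1 : ℂ)) =O[𝓟 (QD D)] fun q => |Qell q z| + 1 := by
    refine (IsBigO.of_bound (2 * z.im)⁻¹ (.of_forall fun q => ?_)).trans (isBigO_Qder hD hz)
    rw [le_inv_mul_iff₀ (by positivity)]
    calc 2 * z.im * ‖(q.1 : ℂ)‖ = |(Qder q z).im| := by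
          simp only [Complex.norm_intCast, Qder, Complex.add_im, Complex.mul_im, Complex.mul_re,
            Complex.re_ofNat, Complex.intCast_re, Complex.im_ofNat, Complex.intCast_im, mul_zero,
            sub_zero, zero_mul, add_zero, abs_mul, Nat.abs_ofNat, abs_of_pos hz]
          ring
      _ ≤ ‖Qder q z‖ := Complex.abs_im_le_norm _
  have hb : (fun q : ℤ × ℤ × ℤ => (q.2.1 : ℂ)) =O[𝓟 (QD D)] fun q => |Qell q z| + 1 :=
    ((isBigO_Qder hD hz).sub (ha.const_mul_left (2 * z))).congr_left fun q => by
      rw [Qder]; ring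
  have hc : (fun q : ℤ × ℤ × ℤ => (q.2.2 : ℂ)) =O[𝓟 (QD D)] fun q => |Qell q z| + 1 :=
    (((isBigO_Qval hD hz).sub (ha.const_mul_left (z ^ 2))).sub (hb.const_mul_left z)).congr_left
      fun q => by rw [Qval]; ring
  have hint {f : ℤ × ℤ × ℤ → ℤ}
      (hf : (fun q => (f q : ℂ)) =O[𝓟 (QD D)] fun q => |Qell q z| + 1) :
      f =O[𝓟 (QD D)] fun q => |Qell q z| + 1 :=
    (isBigO_of_le _ fun q => (Complex.norm_intCast (f q)).ge).trans hf
  exact (hint ha).prod_left ((hint hb).prod_left (hint hc))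

variable {𝒜 : Set (ℤ × ℤ × ℤ)}

theorem exists_norm_le_mul_abs_Qell (hD : 0 < D) (h𝒜 : 𝒜 ⊆ QD D) (hτ : 0 < τ.im)
    (hL : ∀ q ∈ 𝒜, Qell q τ ≠ 0) : ∃ C > 0, ∀ q ∈ 𝒜, ‖q‖ ≤ C * |Qell q τ| := by
  obtain ⟨C, hbound⟩ := (isBigO_abs_Qell_add_one hD hτ).bound
  rw [eventually_principal] at hbound
  have hO : (fun q : 𝒜 => (q : ℤ × ℤ × ℤ)) =O[cofinite] fun q => Qell q τ := by
    have hlarge : ∀ᶠ q : 𝒜 in cofinite, 2 * C ≤ ‖(q : ℤ × ℤ × ℤ)‖ := by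
      have hnorm := tendsto_norm_cocompact_atTop (E := ℤ × ℤ × ℤ)
      rw [cocompact_eq_cofinite] at hnorm
      exact (hnorm.comp Subtype.val_injective.tendsto_cofinite).eventually_ge_atTop _
    refine .of_bound (2 * C) (hlarge.mono fun q hq => ?_)
    have := hbound q (h𝒜 q.2)
    rw [Real.norm_of_nonneg (by positivity)] at this
    rw [Real.norm_eq_abs]
    linarith
  obtain ⟨C', hC', h⟩ := bound_of_isBigO_cofinite hO
  exact ⟨C', hC', fun q hq => h (x := ⟨q, hq⟩) (hL q hq)⟩

theorem abs_Qell_sub_le (q : ℤ × ℤ × ℤ) (z τ : ℂ) : |Qell q z - Qell q τ| ≤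
    ‖q‖ * (|Complex.normSq z - Complex.normSq τ| + |z.re - τ.re|) := by
  have ha : |(q.1 : ℝ)| ≤ ‖q‖ := norm_fst_le q
  have hb : |(q.2.1 : ℝ)| ≤ ‖q‖ := (norm_fst_le q.2).trans (norm_snd_le q)
  calc |Qell q z - Qell q τ|
      = |q.1 * (Complex.normSq z - Complex.normSq τ) + q.2.1 * (z.re - τ.re)| := by
        rw [Qell, Qell]; ring_nf
    _ ≤ |(q.1 : ℝ)| * |Complex.normSq z - Complex.normSq τ| + |(q.2.1 : ℝ)| * |z.re - τ.re| := by
        rw [← abs_mul, ← abs_mul]; exact abs_add_le _ _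
    _ ≤ _ := by rw [mul_add]; gcongr

theorem eventually_norm_le_mul_abs_Qell {C : ℝ} (hC : 0 < C)
    (hL : ∀ q ∈ 𝒜, ‖q‖ ≤ C * |Qell q τ|) :
    ∀ᶠ z in 𝓝 τ, ∀ q ∈ 𝒜, ‖q‖ ≤ 2 * C * |Qell q z| := by
  have hcont : Continuous fun z : ℂ =>
      |Complex.normSq z - Complex.normSq τ| + |z.re - τ.re| := by fun_prop
  have hzero : |Complex.normSq τ - Complex.normSq τ| + |τ.re - τ.re| < (2 * C)⁻¹ := by
    simpa using hC
  filter_upwards [hcont.continuousAt.eventually_lt_const hzero] with z hz q hq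
  have hsub : |Qell q τ| - |Qell q z| ≤ ‖q‖ * (2 * C)⁻¹ := by
    refine (abs_sub_abs_le_abs_sub _ _).trans ?_
    rw [abs_sub_comm]
    exact (abs_Qell_sub_le q z τ).trans (by gcongr)
  have := mul_le_mul_of_nonneg_left hsub hC.le
  have : C * (‖q‖ * (2 * C)⁻¹) = ‖q‖ / 2 := by field_simp
  linarith [hL q hq]

theorem exists_ball_norm_le_mul_abs_Qell (hD : 0 < D) (h𝒜 : 𝒜 ⊆ QD D) (hτ : 0 < τ.im)
    (hL : ∀ q ∈ 𝒜, Qell q τ ≠ 0) : ∃ r > 0, ∃ C > 0, ∀ z ∈ Metric.ball τ r,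
      0 < z.im ∧ ∀ q ∈ 𝒜, ‖q‖ ≤ C * |Qell q z| := by
  obtain ⟨C, hC, hbound⟩ := exists_norm_le_mul_abs_Qell hD h𝒜 hτ hL
  obtain ⟨r, hr, hball⟩ := Metric.eventually_nhds_iff_ball.1
    ((Complex.continuous_im.continuousAt.eventually_const_lt hτ).and
      (eventually_norm_le_mul_abs_Qell hC hbound))
  exact ⟨r, hr, 2 * C, by positivity, hball⟩

end Geometry

section Series

open Complex Filter Topology Metric

theorem tendstoLocallyUniformlyOn_iteratedDeriv {ι : Type*} {φ : Filter ι}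
    {F : ι → ℂ → ℂ} {f : ℂ → ℂ} {U : Set ℂ} (hU : IsOpen U)
    (hF : ∀ i, DifferentiableOn ℂ (F i) U) (hf : TendstoLocallyUniformlyOn F f φ U) (n : ℕ) :
    TendstoLocallyUniformlyOn (fun i => iteratedDeriv n (F i)) (iteratedDeriv n f) φ U := by
  induction n with
  | zero => simpa only [iteratedDeriv_zero] using hf
  | succ n ih =>
    simpa only [iteratedDeriv_succ, Function.comp_def] using
      ih.deriv (.of_forall fun i => differentiableOn_iteratedDeriv hU (hF i) n) hU

variable {ι : Type*} {u : ι → ℝ}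

theorem hasSum_iteratedDeriv_of_summable_norm {F : ι → ℂ → ℂ} {U : Set ℂ} {z : ℂ}
    (hu : Summable u) (hU : IsOpen U) (hF : ∀ i, DifferentiableOn ℂ (F i) U)
    (hFu : ∀ i, ∀ w ∈ U, ‖F i w‖ ≤ u i) (n : ℕ) (hz : z ∈ U) :
    HasSum (fun i => iteratedDeriv n (F i) z) (iteratedDeriv n (fun w => ∑' i, F i w) z) := by
  have hsum (t : Finset ι) : iteratedDeriv n (fun w => ∑ i ∈ t, F i w) z =
      ∑ i ∈ t, iteratedDeriv n (F i) z :=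
    iteratedDeriv_fun_sum fun i _ => ((hF i).contDiffOn hU).contDiffAt (hU.mem_nhds hz)
  refine Tendsto.congr hsum ((tendstoLocallyUniformlyOn_iteratedDeriv hU
    (fun t => DifferentiableOn.fun_sum fun i _ => hF i)
    (tendstoUniformlyOn_tsum hu hFu).tendstoLocallyUniformlyOn n).tendsto_at hz)

variable {τ z : ℂ} {r : ℝ}

theorem norm_le_of_mem_ball (hz : z ∈ ball τ r) : ‖z‖ ≤ ‖τ‖ + r := by
  rw [mem_ball, dist_eq_norm] at hz
  linarith [norm_sub_norm_le z τ]

theorem exists_hasDerivAt_pow_mul {f : ℂ → ℂ} (hf : DifferentiableOn ℂ f (ball τ r)) :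
    ∃ A : ℕ → ℂ → ℂ, (∀ i, A i τ = 0) ∧
      ∀ i, ∀ u ∈ ball τ r, HasDerivAt (A i) (u ^ i * f u) u := by
  have hprim (i : ℕ) := ((differentiable_pow i).differentiableOn.fun_mul hf).isExactOn_ball
    |>.with_val_at τ 0
  choose A hA0 hA using hprim
  exact ⟨A, hA0, hA⟩

theorem norm_pow_mul_le {f : ℂ → ℂ} {M : ℝ} (hf : ‖f z‖ ≤ M) (i : ℕ) (hz : z ∈ ball τ r) :
    ‖z ^ i * f z‖ ≤ (‖τ‖ + r) ^ i * M := by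
  have hz' := norm_le_of_mem_ball hz
  have : 0 ≤ ‖τ‖ + r := (norm_nonneg z).trans hz'
  rw [norm_mul, norm_pow]
  gcongr

theorem norm_le_of_hasDerivAt_pow_mul {f : ℂ → ℂ} {A : ℕ → ℂ → ℂ} {M : ℝ}
    (hf : ∀ u ∈ ball τ r, ‖f u‖ ≤ M)
    (hA : ∀ i, ∀ u ∈ ball τ r, HasDerivAt (A i) (u ^ i * f u) u) (hA0 : ∀ i, A i τ = 0) (i : ℕ)
    (hz : z ∈ ball τ r) : ‖A i z‖ ≤ M * r * (‖τ‖ + r) ^ i := by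
  have hr : 0 < r := pos_of_mem_ball hz
  have hM : 0 ≤ M := (norm_nonneg _).trans (hf z hz)
  have hz' : ‖z - τ‖ ≤ r := (mem_ball_iff_norm.1 hz).le
  calc ‖A i z‖ = ‖A i z - A i τ‖ := by rw [hA0, sub_zero]
    _ ≤ (‖τ‖ + r) ^ i * M * ‖z - τ‖ :=
        (convex_ball τ r).norm_image_sub_le_of_norm_hasDerivWithin_le
          (fun w hw => (hA i w hw).hasDerivWithinAt)
          (fun w hw => norm_pow_mul_le (hf w hw) i hw) (mem_ball_self hr) hz
    _ ≤ (‖τ‖ + r) ^ i * M * r := by gcongr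
    _ = M * r * (‖τ‖ + r) ^ i := by ring

section Moments

variable {f : ι → ℂ → ℂ} {A : ι → ℕ → ℂ → ℂ} (hu : Summable u)
  (hf : ∀ q, ∀ w ∈ ball τ r, ‖f q w‖ ≤ u q)
  (hA : ∀ q i, ∀ w ∈ ball τ r, HasDerivAt (A q i) (w ^ i * f q w) w) (hA0 : ∀ q i, A q i τ = 0)

include hu hf hA hA0

theorem summable_of_hasDerivAt_pow_mul (i : ℕ) (hz : z ∈ ball τ r) :
    Summable fun q => A q i z :=
  ((hu.mul_right r).mul_right ((‖τ‖ + r) ^ i)).of_norm_bounded fun q =>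
    norm_le_of_hasDerivAt_pow_mul (hf q) (hA q) (hA0 q) i hz

theorem hasDerivAt_tsum_pow_mul (i : ℕ) (hz : z ∈ ball τ r) :
    HasDerivAt (fun w => ∑' q, A q i w) (z ^ i * ∑' q, f q z) z := by
  have hτ : τ ∈ ball τ r := mem_ball_self (pos_of_mem_ball hz)
  rw [← tsum_mul_left]
  exact hasDerivAt_tsum_of_isPreconnected (hu.mul_left ((‖τ‖ + r) ^ i)) isOpen_ball
    (convex_ball τ r).isPreconnected (fun q w hw => hA q i w hw)
    (fun q w hw => norm_pow_mul_le (hf q w hw) i hw) hτ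
    (summable_of_hasDerivAt_pow_mul hu hf hA hA0 i hτ) hz

theorem hasSum_eichlerIntegral (n : ℕ) (hz : z ∈ ball τ r) :
    HasSum (fun q => eichlerIntegral n (A q) z)
      (eichlerIntegral n (fun i w => ∑' q, A q i w) z) :=
  hasSum_umbralPow (fun i => (summable_of_hasDerivAt_pow_mul hu hf hA hA0 i hz).hasSum.map
    (starRingEnd ℂ) continuous_conj) n z

end Moments

end Series

section Representation

open Complex Metric

variable {D : ℤ} {q : ℤ × ℤ × ℤ} {m : ℕ} {τ z : ℂ} {r : ℝ}

theorem differentiableOn_inv_Qval_pow {U : Set ℂ} (hQ : ∀ u ∈ U, Qval q u ≠ 0) (n : ℕ) :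
    DifferentiableOn ℂ (fun u => (Qval q u ^ n)⁻¹) U := fun u hu =>
  (((hasDerivAt_Qval q u).fun_pow n).fun_inv
    (pow_ne_zero n (hQ u hu))).differentiableAt.differentiableWithinAt

theorem norm_inv_Qval_pow_le (hD : 0 < D) (hq : q ∈ QD D) (hL : Qell q z ≠ 0) (n : ℕ) :
    ‖(Qval q z ^ n)⁻¹‖ ≤ (|Qell q z| ^ n)⁻¹ := by
  have := abs_pos.2 hL
  rw [norm_inv, norm_pow]
  gcongr
  exact abs_Qell_le_norm_Qval hD hq z

theorem norm_holoSummand_le {A : ℕ → ℂ → ℂ} {M : ℝ} (hm : 1 ≤ m) (hD : 0 < D) (hq : q ∈ QD D)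
    (hUim : ∀ u ∈ ball τ r, 0 < u.im) (hL : ∀ u ∈ ball τ r, Qell q u ≠ 0)
    (hM : ∀ u ∈ ball τ r, (|Qell q u| ^ (m + 1))⁻¹ ≤ M)
    (hA : ∀ i, ∀ u ∈ ball τ r, HasDerivAt (A i) (u ^ i * (Qval q u ^ (m + 1))⁻¹) u)
    (hA0 : ∀ i, A i τ = 0) (hz : z ∈ ball τ r) :
    ‖holoSummand m D q A z‖ ≤ (√D * D ^ m * (‖τ‖ + r) ^ (2 * m + 1) +
      ‖eichlerConst m D‖ * (r * (2 * (‖τ‖ + r)) ^ (2 * m))) * M := by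
  have : (0 : ℝ) < D := mod_cast hD
  have him : 0 < z.im := hUim z hz
  have hzR := norm_le_of_mem_ball hz
  have himR : z.im ≤ ‖τ‖ + r := (im_le_norm z).trans hzR
  have : 0 ≤ ‖τ‖ + r := (norm_nonneg z).trans hzR
  have hQM (u : ℂ) (hu : u ∈ ball τ r) : ‖(Qval q u ^ (m + 1))⁻¹‖ ≤ M :=
    (norm_inv_Qval_pow_le hD hq (hL u hu) (m + 1)).trans (hM u hu)
  calc ‖holoSummand m D q A z‖
      ≤ ‖Fsummand (m + 1) D z q‖ + ‖eichlerConst m D‖ * ‖eichlerIntegral (2 * m) A z‖ := by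
        rw [← norm_mul]
        exact norm_sub_le _ _
    _ ≤ √D * D ^ m * (‖τ‖ + r) ^ (2 * m + 1) * M +
        ‖eichlerConst m D‖ * (M * r * (2 * (‖τ‖ + r)) ^ (2 * m)) := by
        gcongr
        · refine (norm_Fsummand_le hm hD hq him (hL z hz)).trans ?_
          have := hM z hz
          gcongr
        · refine norm_umbralPow_le hzR fun i => ?_
          rw [norm_conj]
          exact norm_le_of_hasDerivAt_pow_mul hQM hA hA0 i hz
    _ = _ := by ring

variable {𝒜 : Set (ℤ × ℤ × ℤ)}

theorem exists_ball_summable_bound (hD : 0 < D) (hDsq : ¬∃ m : ℤ, m ^ 2 = D) (h𝒜 : 𝒜 ⊆ QD D)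
    (hm : 1 ≤ m) (hτ : 0 < τ.im) (hL : ∀ q ∈ 𝒜, Qell q τ ≠ 0) :
    ∃ r > 0, ∃ u : 𝒜 → ℝ, Summable u ∧ ∀ z ∈ ball τ r, 0 < z.im ∧
      ∀ q : 𝒜, Qell q z ≠ 0 ∧ (|Qell q z| ^ (m + 1))⁻¹ ≤ u q := by
  obtain ⟨r, hr, C, hC, hball⟩ := exists_ball_norm_le_mul_abs_Qell hD h𝒜 hτ hL
  refine ⟨r, hr, fun q => C ^ (m + 1) * (‖(q : ℤ × ℤ × ℤ)‖ ^ (m + 1))⁻¹,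
    (summable_norm_pow_inv hDsq (by lia) h𝒜).mul_left _, fun z hz => ⟨(hball z hz).1, fun q => ?_⟩⟩
  have hnorm : 0 < ‖(q : ℤ × ℤ × ℤ)‖ :=
    one_pos.trans_le ((le_max_left _ _).trans (max_one_abs_le_norm hDsq (h𝒜 q.2)))
  have hle := (hball z hz).2 q q.2
  have hpos : 0 < |Qell q z| := pos_of_mul_pos_right (hnorm.trans_le hle) hC.le
  refine ⟨abs_pos.1 hpos, ?_⟩
  change _ ≤ C ^ (m + 1) * (‖(q : ℤ × ℤ × ℤ)‖ ^ (m + 1))⁻¹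
  rw [← div_eq_mul_inv, ← div_pow, ← inv_pow]
  gcongr
  rwa [inv_le_comm₀ hpos (by positivity), inv_div, div_le_iff₀' hC]

section Sum

variable {u : 𝒜 → ℝ} {A : 𝒜 → ℕ → ℂ → ℂ} (hm : 1 ≤ m) (hD : 0 < D) (h𝒜 : 𝒜 ⊆ QD D)
  (hu : Summable u) (him : ∀ z ∈ ball τ r, 0 < z.im)
  (hL : ∀ q : 𝒜, ∀ z ∈ ball τ r, Qell q z ≠ 0)
  (hLu : ∀ q : 𝒜, ∀ z ∈ ball τ r, (|Qell q z| ^ (m + 1))⁻¹ ≤ u q)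
  (hA : ∀ (q : 𝒜) i, ∀ z ∈ ball τ r, HasDerivAt (A q i) (z ^ i * (Qval q z ^ (m + 1))⁻¹) z)
  (hA0 : ∀ q i, A q i τ = 0)

include hm hD h𝒜 hu him hL hLu hA hA0

theorem differentiableOn_tsum_holoSummand (hr : 0 < r) :
    DifferentiableOn ℂ (fun z => ∑' q : 𝒜, holoSummand m D q (A q) z) (ball τ r) :=
  differentiableOn_tsum_of_summable_norm (hu.mul_left _)
    (fun q => differentiableOn_holoSummand hm hD (h𝒜 q.2) isOpen_ball
      (convex_ball τ r).isPreconnected (mem_ball_self hr) him (hL q) (hA q) (hA0 q))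
    isOpen_ball fun q _ hz =>
      norm_holoSummand_le hm hD (h𝒜 q.2) him (hL q) (hLu q) (hA q) (hA0 q) hz

theorem iteratedDeriv_tsum_holoSummand (hz : z ∈ ball τ r) :
    iteratedDeriv (2 * m + 1) (fun z => ∑' q : 𝒜, holoSummand m D q (A q) z) z =
      -eichlerConst m D * (2 * m).factorial * ∑' q : 𝒜, (Qval q z ^ (m + 1))⁻¹ := by
  have hUc := (convex_ball τ r).isPreconnected
  have hτ : τ ∈ ball τ r := mem_ball_self (pos_of_mem_ball hz)
  have hsum := hasSum_iteratedDeriv_of_summable_norm (hu.mul_left _) isOpen_ball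
    (fun q => differentiableOn_holoSummand hm hD (h𝒜 q.2) isOpen_ball hUc hτ him (hL q) (hA q)
      (hA0 q))
    (fun q _ hz => norm_holoSummand_le hm hD (h𝒜 q.2) him (hL q) (hLu q) (hA q) (hA0 q) hz)
    (2 * m + 1) hz
  rw [← hsum.tsum_eq, ← tsum_mul_left]
  exact tsum_congr fun q =>
    iteratedDeriv_holoSummand hm hD (h𝒜 q.2) isOpen_ball hUc hτ him (hL q) (hA q) (hA0 q) hz

theorem tsum_Fsummand_eq (hz : z ∈ ball τ r) :
    ∑' q : 𝒜, Fsummand (m + 1) D z q = ∑' q : 𝒜, holoSummand m D q (A q) z +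
      eichlerConst m D * eichlerIntegral (2 * m) (fun i w => ∑' q, A q i w) z := by
  have hholo : Summable fun q : 𝒜 => holoSummand m D q (A q) z :=
    (hu.mul_left _).of_norm_bounded fun q =>
      norm_holoSummand_le hm hD (h𝒜 q.2) him (hL q) (hLu q) (hA q) (hA0 q) hz
  have heichler := (hasSum_eichlerIntegral hu (fun q w hw =>
    (norm_inv_Qval_pow_le hD (h𝒜 q.2) (hL q w hw) (m + 1)).trans (hLu q w hw)) hA hA0
    (2 * m) hz).mul_left (eichlerConst m D)
  rw [← (hholo.hasSum.add heichler).tsum_eq]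
  exact tsum_congr fun q => (sub_add_cancel _ _).symm

end Sum

theorem exists_tsum_Fsummand_eqOn (hm : 1 ≤ m) (hD : 0 < D) (hDsq : ¬∃ m : ℤ, m ^ 2 = D)
    (h𝒜 : 𝒜 ⊆ QD D) (hτ : 0 < τ.im) (hL : ∀ q ∈ 𝒜, Qell q τ ≠ 0) :
    ∃ U, IsOpen U ∧ τ ∈ U ∧
      DifferentiableOn ℂ (fun z => ∑' q : 𝒜, (Qval q z ^ (m + 1))⁻¹) U ∧
      ∃ (H : ℂ → ℂ) (A : ℕ → ℂ → ℂ), DifferentiableOn ℂ H U ∧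
        iteratedDeriv (2 * m + 1) H τ =
          -eichlerConst m D * (2 * m).factorial * ∑' q : 𝒜, (Qval q τ ^ (m + 1))⁻¹ ∧
        (∀ i, ∀ z ∈ U, HasDerivAt (A i) (z ^ i * ∑' q : 𝒜, (Qval q z ^ (m + 1))⁻¹) z) ∧
        Set.EqOn (fun z => ∑' q : 𝒜, Fsummand (m + 1) D z q)
          (fun z => H z + eichlerConst m D * eichlerIntegral (2 * m) A z) U := by
  obtain ⟨r, hr, u, hu, hball⟩ := exists_ball_summable_bound hD hDsq h𝒜 hm hτ hL
  have him (z : ℂ) (hz : z ∈ ball τ r) : 0 < z.im := (hball z hz).1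
  have hL (q : 𝒜) (z : ℂ) (hz : z ∈ ball τ r) : Qell q z ≠ 0 := ((hball z hz).2 q).1
  have hLu (q : 𝒜) (z : ℂ) (hz : z ∈ ball τ r) := ((hball z hz).2 q).2
  have hQdiff (q : 𝒜) := differentiableOn_inv_Qval_pow (U := ball τ r)
    (fun z hz => Qval_ne_zero hD (h𝒜 q.2) (hL q z hz)) (m + 1)
  have hQu (q : 𝒜) (z : ℂ) (hz : z ∈ ball τ r) :=
    (norm_inv_Qval_pow_le hD (h𝒜 q.2) (hL q z hz) (m + 1)).trans (hLu q z hz)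
  choose A hA0 hA using fun q => exists_hasDerivAt_pow_mul (hQdiff q)
  exact ⟨ball τ r, isOpen_ball, mem_ball_self hr,
    differentiableOn_tsum_of_summable_norm hu hQdiff isOpen_ball hQu, _, _,
    differentiableOn_tsum_holoSummand hm hD h𝒜 hu him hL hLu hA hA0 hr,
    iteratedDeriv_tsum_holoSummand hm hD h𝒜 hu him hL hLu hA hA0 (mem_ball_self hr),
    fun i z hz => hasDerivAt_tsum_pow_mul hu hQu hA hA0 i hz,
    fun z hz => tsum_Fsummand_eq hm hD h𝒜 hu him hL hLu hA hA0 hz⟩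

end Representation

theorem IsNarrowClass.subset_QD {D : ℤ} {𝒜 : Set (ℤ × ℤ × ℤ)} (h𝒜 : IsNarrowClass D 𝒜) :
    𝒜 ⊆ QD D := by
  obtain ⟨q₀, hq₀, rfl⟩ := h𝒜
  rintro q ⟨γ, rfl⟩
  have hdet := γ.2
  rw [Matrix.det_fin_two] at hdet
  simp only [QD, Set.mem_ofPred_eq, QAct] at hq₀ ⊢
  rw [← hq₀]
  linear_combination (q₀.2.1 ^ 2 - 4 * q₀.1 * q₀.2.2) *
    (γ.1 0 0 * γ.1 1 1 - γ.1 0 1 * γ.1 1 0 + 1) * hdet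

section Normalization

open Complex

/-- The factor in front of the series defining `F_{1-k,D,𝒜}`. -/
def FAConst (k : ℕ) (D : ℤ) : ℂ :=
  (-1) ^ k * Dpow D (1 / 2 - (k : ℝ)) /
    (((Nat.choose (2 * k - 2) (k - 1) : ℝ) * Real.pi : ℝ) : ℂ)

theorem conj_FAConst (k : ℕ) (D : ℤ) : conj (FAConst k D) = FAConst k D := by
  simp only [FAConst, Dpow, map_div₀, map_mul, map_pow, map_neg, map_one, conj_ofReal]

theorem Dpow_sub_one_half {D : ℤ} (hD : 0 < D) (m : ℕ) :
    Dpow D (((m + 1 : ℕ) : ℝ) - 1 / 2) = (√D * D ^ m : ℝ) := by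
  have hD' : (0 : ℝ) < D := mod_cast hD
  rw [Dpow, Real.sqrt_eq_rpow, ← Real.rpow_natCast, ← Real.rpow_add hD']
  congr 2
  push_cast
  ring

theorem Dpow_mul_fA {D : ℤ} (hD : 0 < D) (m : ℕ) (𝒜 : Set (ℤ × ℤ × ℤ)) (τ : ℂ) :
    Dpow D (1 / 2 - ((m + 1 : ℕ) : ℝ)) * fA (m + 1) D 𝒜 τ =
      FAConst (m + 1) D * (√D * D ^ m : ℝ) * ∑' q : 𝒜, (Qval q τ ^ (m + 1))⁻¹ := by
  simp only [fA, FAConst, Dpow_sub_one_half hD, zpow_neg, zpow_natCast]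
  ring

theorem two_mul_I_mul_conj_FAConst_mul_eichlerConst (m : ℕ) (D : ℤ) :
    2 * I * (-4) ^ m * conj (FAConst (m + 1) D * eichlerConst m D) =
      FAConst (m + 1) D * (√D * D ^ m : ℝ) := by
  rw [map_mul, conj_FAConst, conj_eichlerConst, eichlerConst]
  field_simp
  linear_combination -FAConst (m + 1) D * (√D * D ^ m : ℝ) * I_sq

theorem one_div_two_pi_I_pow_mul_eichlerConst (m : ℕ) (D : ℤ) :
    (1 / (2 * Real.pi * I)) ^ (2 * m + 1) * eichlerConst m D =
      (√D * D ^ m : ℝ) / ((4 * Real.pi) ^ (2 * m + 1) : ℝ) := by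
  have hI : I ^ (2 * m + 1) = (-1) ^ m * I := by rw [pow_succ, pow_mul, I_sq]
  have h4 : (4 : ℂ) ^ (2 * m + 1) = 2 ^ (2 * m + 1) * (2 * 4 ^ m) := by
    rw [pow_succ 2, pow_mul, pow_succ, two_mul m, pow_add]
    ring
  have hπ : (Real.pi : ℂ) ≠ 0 := mod_cast Real.pi_ne_zero
  rw [eichlerConst, one_div, inv_pow, mul_pow, mul_pow, hI, neg_pow (4 : ℂ)]
  push_cast
  rw [mul_pow (4 : ℂ), h4]
  field_simp
  rw [pow_right_comm, neg_one_sq, one_pow, one_mul]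

end Normalization

theorem stmt4_general (k : ℕ) (hk : 2 ≤ k) (D : ℤ) (hD : 0 < D) (hDsq : ¬∃ m : ℤ, m ^ 2 = D)
    (𝒜 : Set (ℤ × ℤ × ℤ)) (h𝒜 : 𝒜 ⊆ QD D)
    (τ : ℂ) (hτ : 0 < τ.im) (hτE : ∀ q ∈ 𝒜, Qell q τ ≠ 0) :
    xiOp k (FA k D 𝒜) τ = Dpow D (1 / 2 - (k : ℝ)) * fA k D 𝒜 τ ∧
    (Dop^[2 * k - 1] (FA k D 𝒜)) τ =
      -Dpow D (1 / 2 - (k : ℝ)) *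
        ((Nat.factorial (2 * k - 2) : ℂ) / (((4 * Real.pi) ^ (2 * k - 1) : ℝ) : ℂ)) *
        fA k D 𝒜 τ ∧
    DeltaOp k (FA k D 𝒜) τ = 0 := by
  obtain ⟨m, rfl⟩ := Nat.exists_eq_add_of_le' (one_le_two.trans hk)
  obtain ⟨U, hU, hτU, hf, H, A, hH, hH', hA, hF⟩ :=
    exists_tsum_Fsummand_eqOn (by lia : 1 ≤ m) hD hDsq h𝒜 hτ hτE
  set κ := FAConst (m + 1) D
  have hκH : DifferentiableOn ℂ (fun z => κ * H z) U := hH.const_mul κ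
  have hFA : Set.EqOn (FA (m + 1) D 𝒜)
      (fun z => κ * H z + κ * eichlerConst m D * eichlerIntegral (2 * m) A z) U := fun z hz =>
    (congrArg (κ * ·) (hF hz)).trans (by ring)
  refine ⟨?_, ?_, DeltaOp_eq_zero_of_eqOn hU hκH hf hA hFA hτU⟩
  · rw [xiOp_eq_of_eqOn hU hκH hA hFA hτU hτ.ne',
      two_mul_I_mul_conj_FAConst_mul_eichlerConst, Dpow_mul_fA hD]
  · have hiter := iterate_Dop_succ_eq_of_eqOn hU hκH hA hFA hτU
    rw [iteratedDeriv_const_mul_field, hH'] at hiter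
    refine hiter.trans ?_
    rw [show 2 * (m + 1) - 1 = 2 * m + 1 from rfl, show 2 * (m + 1) - 2 = 2 * m from rfl]
    linear_combination
      (-κ * (2 * m).factorial * ∑' q : 𝒜, (Qval q τ ^ (m + 1))⁻¹) *
        one_div_two_pi_I_pow_mul_eichlerConst m D +
      ((2 * m).factorial / ((4 * Real.pi) ^ (2 * m + 1) : ℝ)) * Dpow_mul_fA hD m 𝒜 τ

theorem stmt4 (k : ℕ) (hk : 2 ≤ k) (D : ℤ) (hD : 0 < D)
    (hD4 : D % 4 = 0 ∨ D % 4 = 1) (hDsq : ¬∃ m : ℤ, m ^ 2 = D)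
    (𝒜 : Set (ℤ × ℤ × ℤ)) (h𝒜 : IsNarrowClass D 𝒜)
    (τ : ℂ) (hτ : 0 < τ.im) (hτE : ∀ q ∈ QD D, Qell q τ ≠ 0) :
    xiOp k (FA k D 𝒜) τ = Dpow D (1 / 2 - (k : ℝ)) * fA k D 𝒜 τ ∧
    (Dop^[2 * k - 1] (FA k D 𝒜)) τ =
      -Dpow D (1 / 2 - (k : ℝ)) *
        ((Nat.factorial (2 * k - 2) : ℂ) / (((4 * Real.pi) ^ (2 * k - 1) : ℝ) : ℂ)) *
        fA k D 𝒜 τ ∧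
    DeltaOp k (FA k D 𝒜) τ = 0 :=
  stmt4_general k hk D hD hDsq 𝒜 h𝒜.subset_QD τ hτ fun q hq => hτE q (h𝒜.subset_QD hq)
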